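/- arXiv:0912.0832 — 13 statements merged into one kernel-verified Lean document; each statement's English description precedes it below -/
import Mathlib

section
/- Let (sⱼⁱ) be an invertible real 3×3 matrix, let Δⱼⁱ be the 2×2 minor determinant obtained by deleting the i-th row and j-th column of (sⱼⁱ), and define Φ on the open set O ⊆ ℝ³ of points (t,x,v) where the two denominators s₁³t+s₂³x+s₃³ and (−Δ₃²t+Δ₁²)v+(Δ₃²x+Δ₂²) are nonzero, by Φ(t,x,v) = ( (s₁¹t+s₂¹x+s₃¹)/(s₁³t+s₂³x+s₃³), (s₁²t+s₂²x+s₃²)/(s₁³t+s₂³x+s₃³), ((−Δ₃¹t+Δ₁¹)v+(Δ₃¹x+Δ₂¹)) / ((−Δ₃²t+Δ₁²)v+(Δ₃²x+Δ₂²)) ). If D, D′ ⊆ ℝ² are open, u : D → ℝ is a C¹ solution of ∂u/∂t + u·∂u/∂x = 0 whose graph is contained in O, and ũ : D′ → ℝ is a C¹ function with Φ({(t,x,u(t,x)) : (t,x) ∈ D}) = {(t,x,ũ(t,x)) : (t,x) ∈ D′}, then ũ satisfies ∂ũ/∂t + ũ·∂ũ/∂x = 0 on D′. -/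
/-- The determinant of the 2×2 matrix obtained from a 3×3 matrix `s` by deleting
row `i` and column `j`. -/
noncomputable def minor3 (s : Matrix (Fin 3) (Fin 3) ℝ) (i j : Fin 3) : ℝ :=
  (s.submatrix i.succAbove j.succAbove).det

/-- The graph `{(t, x, u (t, x)) : (t, x) ∈ D}` of a function `u` over `D ⊆ ℝ²`. -/
def burgersGraph (D : Set (ℝ × ℝ)) (u : ℝ × ℝ → ℝ) : Set (ℝ × ℝ × ℝ) :=
  (fun p : ℝ × ℝ => (p.1, p.2, u p)) '' D

/-- The projective transformation of `ℝ³` induced by the matrix `s`. -/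
noncomputable def projPhi (s : Matrix (Fin 3) (Fin 3) ℝ) (p : ℝ × ℝ × ℝ) : ℝ × ℝ × ℝ :=
  ((s 0 0 * p.1 + s 0 1 * p.2.1 + s 0 2) / (s 2 0 * p.1 + s 2 1 * p.2.1 + s 2 2),
   (s 1 0 * p.1 + s 1 1 * p.2.1 + s 1 2) / (s 2 0 * p.1 + s 2 1 * p.2.1 + s 2 2),
   ((-(minor3 s 0 2) * p.1 + minor3 s 0 0) * p.2.2 + (minor3 s 0 2 * p.2.1 + minor3 s 0 1)) /
     ((-(minor3 s 1 2) * p.1 + minor3 s 1 0) * p.2.2 + (minor3 s 1 2 * p.2.1 + minor3 s 1 1)))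

/-- The open set where both denominators of `projPhi s` are nonzero. -/
def projPhiDom (s : Matrix (Fin 3) (Fin 3) ℝ) : Set (ℝ × ℝ × ℝ) :=
  {p | s 2 0 * p.1 + s 2 1 * p.2.1 + s 2 2 ≠ 0 ∧
    (-(minor3 s 1 2) * p.1 + minor3 s 1 0) * p.2.2 +
      (minor3 s 1 2 * p.2.1 + minor3 s 1 1) ≠ 0}

/-!
A function `u` solves the equation exactly when its derivative at each `p` in the direction
`(1, u p)` vanishes. The first two components of `projPhi s` form the projective transformation `φ`
of the plane with matrix `s`; the third is the slope of the `φ`-image of the line of slope `v`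
through `(t, x)`, so it depends on `(t, x, v)` only through that line. As `p` moves in the direction
`(1, u p)`, the line of slope `u p` through `p` is stationary to first order, hence so is
`ũ (φ p)`, the slope of its image. Since `dφ` sends `(1, u p)` to a nonzero multiple of
`(1, ũ (φ p))`, the derivative of `ũ` in that direction vanishes.
-/

open Matrix Filter
open scoped Topology

section LineDerivative

variable {𝕜 E F G : Type*} [NontriviallyNormedField 𝕜] [AddCommGroup E] [Module 𝕜 E]
  [NormedAddCommGroup F] [NormedSpace 𝕜 F] [NormedAddCommGroup G] [NormedSpace 𝕜 G] {x v : E}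

lemma hasLineDerivAt_const_dotProduct {ι : Type*} [Fintype ι] (w : ι → 𝕜) {f : E → ι → 𝕜}
    {f' : ι → 𝕜} (hf : HasLineDerivAt 𝕜 f f' x v) :
    HasLineDerivAt 𝕜 (fun y => w ⬝ᵥ f y) (w ⬝ᵥ f') x v :=
  HasDerivAt.fun_sum fun i _ => (hasDerivAt_pi.1 hf i).const_mul (w i)

lemma hasLineDerivAt_fun_div {f g : E → 𝕜} {f' g' : 𝕜} (hf : HasLineDerivAt 𝕜 f f' x v)
    (hg : HasLineDerivAt 𝕜 g g' x v) (hx : g x ≠ 0) :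
    HasLineDerivAt 𝕜 (fun y => f y / g y) ((f' * g x - f x * g') / g x ^ 2) x v := by
  simpa [HasLineDerivAt] using HasDerivAt.fun_div hf hg (by simpa using hx)

lemma hasLineDerivAt_prodMk {f : E → F} {g : E → G} {f' : F} {g' : G}
    (hf : HasLineDerivAt 𝕜 f f' x v) (hg : HasLineDerivAt 𝕜 g g' x v) :
    HasLineDerivAt 𝕜 (fun y => (f y, g y)) (f', g') x v :=
  HasDerivAt.prodMk hf hg

lemma hasLineDerivAt_comp {g : F → G} {g' : F →L[𝕜] G} {f : E → F} {f' : F}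
    (hg : HasFDerivAt g g' (f x)) (hf : HasLineDerivAt 𝕜 f f' x v) :
    HasLineDerivAt 𝕜 (fun y => g (f y)) (g' f') x v :=
  hg.comp_hasDerivAt_of_eq 0 hf (by simp)

lemma fderiv_prod_apply_eq_smul_deriv_add {u : 𝕜 × 𝕜 → F} {p : 𝕜 × 𝕜}
    (hu : DifferentiableAt 𝕜 u p) (d : 𝕜 × 𝕜) :
    fderiv 𝕜 u p d =
      d.1 • deriv (fun t => u (t, p.2)) p.1 + d.2 • deriv (fun x => u (p.1, x)) p.2 := by
  have deriv_fst : HasDerivAt (fun t => u (t, p.2)) (fderiv 𝕜 u p (1, 0)) p.1 :=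
    hu.hasFDerivAt.comp_hasDerivAt (f := fun t => (t, p.2)) p.1
      ((hasDerivAt_id p.1).prodMk (hasDerivAt_const p.1 p.2))
  have deriv_snd : HasDerivAt (fun x => u (p.1, x)) (fderiv 𝕜 u p (0, 1)) p.2 :=
    hu.hasFDerivAt.comp_hasDerivAt (f := fun x => (p.1, x)) p.2
      ((hasDerivAt_const p.2 p.1).prodMk (hasDerivAt_id p.2))
  rw [deriv_fst.deriv, deriv_snd.deriv, ← map_smul, ← map_smul, ← map_add]
  simp

lemma hasLineDerivAt_zero_iff_burgers {u : 𝕜 × 𝕜 → 𝕜} {p : 𝕜 × 𝕜}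
    (hu : DifferentiableAt 𝕜 u p) :
    HasLineDerivAt 𝕜 u 0 p (1, u p) ↔
      deriv (fun t => u (t, p.2)) p.1 + u p * deriv (fun x => u (p.1, x)) p.2 = 0 := by
  have along : HasLineDerivAt 𝕜 u (fderiv 𝕜 u p (1, u p)) p (1, u p) :=
    hu.hasFDerivAt.hasLineDerivAt _
  rw [fderiv_prod_apply_eq_smul_deriv_add hu, one_smul, smul_eq_mul] at along
  exact ⟨fun h => along.unique h, fun h => h ▸ along⟩

end LineDerivative

section HomogeneousCoordinates

variable {R : Type*} [CommRing R]

/-- Homogeneous coordinates of a point `(t, x)` of the affine plane. -/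
def homPoint (p : R × R) : Fin 3 → R :=
  ![p.1, p.2, 1]

/-- Homogeneous coordinates of the point at infinity of the lines `x = v * t + const`. -/
def homDirection (v : R) : Fin 3 → R :=
  ![1, v, 0]

/-- Dual homogeneous coordinates of the line of slope `v` through `p`, as the cross product of two
of its points. -/
def homLine (p : R × R) (v : R) : Fin 3 → R :=
  homDirection v ⨯₃ homPoint p

lemma dotProduct_homPoint (a : Fin 3 → R) (p : R × R) :
    a ⬝ᵥ homPoint p = a 0 * p.1 + a 1 * p.2 + a 2 := by
  simp only [homPoint, vec3_dotProduct, cons_val, mul_one]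

lemma homLine_eq (p : R × R) (v : R) : homLine p v = ![v, -1, p.2 - v * p.1] := by
  simp [homLine, homDirection, homPoint, cross_apply]

lemma dotProduct_homLine (w : Fin 3 → R) (p : R × R) (v : R) :
    w ⬝ᵥ homLine p v = (-w 2 * p.1 + w 0) * v + (w 2 * p.2 - w 1) := by
  simp only [homLine_eq, vec3_dotProduct, cons_val]
  ring

end HomogeneousCoordinates

section ProjectiveMap

variable {K : Type*} [Field K]

/-- The projective transformation of the affine plane with matrix `s`; where the denominator
vanishes it takes the junk value `0`. -/
def projectiveMap (s : Matrix (Fin 3) (Fin 3) K) (p : K × K) : K × K :=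
  (s 0 ⬝ᵥ homPoint p / s 2 ⬝ᵥ homPoint p, s 1 ⬝ᵥ homPoint p / s 2 ⬝ᵥ homPoint p)

/-- The slope of the image under `projectiveMap s` of the line of slope `v` through `p`; where the
denominator vanishes (for instance when the image is vertical) it takes the junk value `0`. -/
def projectiveSlope (s : Matrix (Fin 3) (Fin 3) K) (p : K × K) (v : K) : K :=
  (s 1 ⨯₃ s 2 ⬝ᵥ homLine p v) / (s 0 ⨯₃ s 2 ⬝ᵥ homLine p v)

end ProjectiveMap

section Characteristics

variable {𝕜 : Type*} [NontriviallyNormedField 𝕜]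

lemma hasLineDerivAt_homPoint (p : 𝕜 × 𝕜) (v : 𝕜) :
    HasLineDerivAt 𝕜 homPoint (homDirection v) p (1, v) := by
  have fst_line : HasDerivAt (fun r : 𝕜 => p.1 + r * 1) 1 0 := by
    simpa using (hasDerivAt_id (0 : 𝕜)).const_add p.1
  have snd_line : HasDerivAt (fun r : 𝕜 => p.2 + r * v) v 0 := by
    simpa using ((hasDerivAt_id (0 : 𝕜)).mul_const v).const_add p.2
  refine hasDerivAt_pi.2 fun i => ?_
  fin_cases i
  · exact fst_line
  · exact snd_line
  · exact hasDerivAt_const 0 1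

/-- By the Binet–Cauchy identity the Wronskian in the quotient rule depends only on the line. -/
lemma hasLineDerivAt_dotProduct_homPoint_div (a c : Fin 3 → 𝕜) {p : 𝕜 × 𝕜} (v : 𝕜)
    (hc : c ⬝ᵥ homPoint p ≠ 0) :
    HasLineDerivAt 𝕜 (fun q => a ⬝ᵥ homPoint q / c ⬝ᵥ homPoint q)
      ((a ⨯₃ c ⬝ᵥ homLine p v) / (c ⬝ᵥ homPoint p) ^ 2) p (1, v) := by
  rw [homLine, cross_dot_cross]
  exact hasLineDerivAt_fun_div (hasLineDerivAt_const_dotProduct a (hasLineDerivAt_homPoint p v))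
    (hasLineDerivAt_const_dotProduct c (hasLineDerivAt_homPoint p v)) hc

lemma hasLineDerivAt_projectiveMap (s : Matrix (Fin 3) (Fin 3) 𝕜) {p : 𝕜 × 𝕜} {v : 𝕜}
    (hp : s 2 ⬝ᵥ homPoint p ≠ 0) (hv : s 0 ⨯₃ s 2 ⬝ᵥ homLine p v ≠ 0) :
    HasLineDerivAt 𝕜 (projectiveMap s)
      (((s 0 ⨯₃ s 2 ⬝ᵥ homLine p v) / (s 2 ⬝ᵥ homPoint p) ^ 2) • (1, projectiveSlope s p v))
      p (1, v) := by
  rw [Prod.smul_mk, smul_eq_mul, smul_eq_mul, mul_one, projectiveSlope, div_mul_div_cancel₀' hv]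
  exact hasLineDerivAt_prodMk (hasLineDerivAt_dotProduct_homPoint_div (s 0) (s 2) v hp)
    (hasLineDerivAt_dotProduct_homPoint_div (s 1) (s 2) v hp)

lemma hasLineDerivAt_homLine {u : 𝕜 × 𝕜 → 𝕜} {p : 𝕜 × 𝕜}
    (hu : HasLineDerivAt 𝕜 u 0 p (1, u p)) :
    HasLineDerivAt 𝕜 (fun q => homLine q (u q)) 0 p (1, u p) := by
  have point := hasDerivAt_pi.1 (hasLineDerivAt_homPoint p (u p))
  have intercept : HasLineDerivAt 𝕜 (fun q => q.2 - u q * q.1) 0 p (1, u p) :=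
    ((point 1).fun_sub (HasDerivAt.fun_mul hu (point 0))).congr_deriv (by simp [homDirection])
  simp only [homLine_eq]
  refine hasDerivAt_pi.2 fun i => ?_
  fin_cases i
  · exact hu
  · exact hasDerivAt_const 0 (-1)
  · exact intercept

lemma hasLineDerivAt_projectiveSlope {s : Matrix (Fin 3) (Fin 3) 𝕜} {u : 𝕜 × 𝕜 → 𝕜}
    {p : 𝕜 × 𝕜} (hu : HasLineDerivAt 𝕜 u 0 p (1, u p))
    (hp : s 0 ⨯₃ s 2 ⬝ᵥ homLine p (u p) ≠ 0) :
    HasLineDerivAt 𝕜 (fun q => projectiveSlope s q (u q)) 0 p (1, u p) := by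
  simpa [projectiveSlope] using hasLineDerivAt_fun_div
    (hasLineDerivAt_const_dotProduct (s 1 ⨯₃ s 2) (hasLineDerivAt_homLine hu))
    (hasLineDerivAt_const_dotProduct (s 0 ⨯₃ s 2) (hasLineDerivAt_homLine hu)) hp

theorem hasLineDerivAt_zero_projectiveMap {s : Matrix (Fin 3) (Fin 3) 𝕜} {u u' : 𝕜 × 𝕜 → 𝕜}
    {p : 𝕜 × 𝕜} (hu : HasLineDerivAt 𝕜 u 0 p (1, u p)) (hp : s 2 ⬝ᵥ homPoint p ≠ 0)
    (hv : s 0 ⨯₃ s 2 ⬝ᵥ homLine p (u p) ≠ 0)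
    (hu' : DifferentiableAt 𝕜 u' (projectiveMap s p))
    (hslope : ∀ᶠ q in 𝓝 p, u' (projectiveMap s q) = projectiveSlope s q (u q)) :
    HasLineDerivAt 𝕜 u' 0 (projectiveMap s p) (1, u' (projectiveMap s p)) := by
  have chain_rule := hasLineDerivAt_comp hu'.hasFDerivAt (hasLineDerivAt_projectiveMap s hp hv)
  have stationary : HasLineDerivAt 𝕜 (fun q => u' (projectiveMap s q)) 0 p (1, u p) :=
    (hasLineDerivAt_projectiveSlope hu hv).congr_of_eventuallyEq hslope
  have scaled_zero := chain_rule.unique stationary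
  rw [map_smul, smul_eq_zero_iff_right (div_ne_zero hv (pow_ne_zero 2 hp)),
    ← hslope.self_of_nhds] at scaled_zero
  exact scaled_zero ▸ hu'.hasFDerivAt.hasLineDerivAt _

end Characteristics

lemma cross_row_zero_row_two (s : Matrix (Fin 3) (Fin 3) ℝ) :
    s 0 ⨯₃ s 2 = ![minor3 s 1 0, -minor3 s 1 1, minor3 s 1 2] := by
  simp [cross_apply, minor3, det_fin_two, Fin.succAbove]

lemma cross_row_one_row_two (s : Matrix (Fin 3) (Fin 3) ℝ) :
    s 1 ⨯₃ s 2 = ![minor3 s 0 0, -minor3 s 0 1, minor3 s 0 2] := by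
  simp [cross_apply, minor3, det_fin_two, Fin.succAbove]

lemma projPhi_eq (s : Matrix (Fin 3) (Fin 3) ℝ) (p : ℝ × ℝ) (v : ℝ) :
    projPhi s (p.1, p.2, v) =
      ((projectiveMap s p).1, (projectiveMap s p).2, projectiveSlope s p v) := by
  simp only [projPhi, projectiveMap, projectiveSlope, cross_row_zero_row_two,
    cross_row_one_row_two, dotProduct_homPoint, dotProduct_homLine, cons_val, sub_neg_eq_add]

lemma mem_projPhiDom_iff (s : Matrix (Fin 3) (Fin 3) ℝ) (p : ℝ × ℝ) (v : ℝ) :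
    (p.1, p.2, v) ∈ projPhiDom s ↔
      s 2 ⬝ᵥ homPoint p ≠ 0 ∧ s 0 ⨯₃ s 2 ⬝ᵥ homLine p v ≠ 0 := by
  simp only [projPhiDom, Set.mem_ofPred_eq, cross_row_zero_row_two, dotProduct_homPoint,
    dotProduct_homLine, cons_val, sub_neg_eq_add]

lemma mem_burgersGraph_iff (D : Set (ℝ × ℝ)) (u : ℝ × ℝ → ℝ) (p : ℝ × ℝ) (v : ℝ) :
    (p.1, p.2, v) ∈ burgersGraph D u ↔ p ∈ D ∧ u p = v := by
  simp [burgersGraph]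

lemma projPhi_mem_burgersGraph_iff (s : Matrix (Fin 3) (Fin 3) ℝ) (D : Set (ℝ × ℝ))
    (u : ℝ × ℝ → ℝ) (p : ℝ × ℝ) (v : ℝ) :
    projPhi s (p.1, p.2, v) ∈ burgersGraph D u ↔
      projectiveMap s p ∈ D ∧ u (projectiveMap s p) = projectiveSlope s p v := by
  rw [projPhi_eq, mem_burgersGraph_iff]

lemma image_projectiveMap_eq {s : Matrix (Fin 3) (Fin 3) ℝ} {D D' : Set (ℝ × ℝ)}
    {u u' : ℝ × ℝ → ℝ} (h : projPhi s '' burgersGraph D u = burgersGraph D' u') :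
    projectiveMap s '' D = D' := by
  have planar_images := congrArg (Set.image fun q : ℝ × ℝ × ℝ => (q.1, q.2.1)) h
  simpa only [burgersGraph, Set.image_image, projPhi_eq, Set.image_id']
    using planar_images

theorem stmt1_general
    (s : Matrix (Fin 3) (Fin 3) ℝ)
    (D D' : Set (ℝ × ℝ)) (hD : IsOpen D) (hD' : IsOpen D')
    (u : ℝ × ℝ → ℝ) (hu : DifferentiableOn ℝ u D)
    (husol : ∀ p ∈ D,
      deriv (fun t => u (t, p.2)) p.1 + u p * deriv (fun x => u (p.1, x)) p.2 = 0)
    (hgraph : burgersGraph D u ⊆ projPhiDom s)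
    (u' : ℝ × ℝ → ℝ) (hu' : DifferentiableOn ℝ u' D')
    (himage : projPhi s '' burgersGraph D u = burgersGraph D' u') :
    ∀ p ∈ D',
      deriv (fun t => u' (t, p.2)) p.1 + u' p * deriv (fun x => u' (p.1, x)) p.2 = 0 := by
  intro q hq
  obtain ⟨p, hp, rfl⟩ := (image_projectiveMap_eq himage).symm ▸ hq
  have slope_eq : ∀ r ∈ D, u' (projectiveMap s r) = projectiveSlope s r (u r) := fun r hr =>
    ((projPhi_mem_burgersGraph_iff s D' u' r (u r)).1
      (himage ▸ Set.mem_image_of_mem _ (Set.mem_image_of_mem _ hr))).2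
  obtain ⟨hpoint, hline⟩ := (mem_projPhiDom_iff s p (u p)).1 (hgraph (Set.mem_image_of_mem _ hp))
  have hup : DifferentiableAt ℝ u p := hu.differentiableAt (hD.mem_nhds hp)
  have hu'p : DifferentiableAt ℝ u' (projectiveMap s p) := hu'.differentiableAt (hD'.mem_nhds hq)
  exact (hasLineDerivAt_zero_iff_burgers hu'p).1 <| hasLineDerivAt_zero_projectiveMap
    ((hasLineDerivAt_zero_iff_burgers hup).2 (husol p hp)) hpoint hline hu'p
    (eventually_of_mem (hD.mem_nhds hp) slope_eq)

theorem stmt1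
    (s : Matrix (Fin 3) (Fin 3) ℝ) (hs : IsUnit s.det)
    (D D' : Set (ℝ × ℝ)) (hD : IsOpen D) (hD' : IsOpen D')
    (u : ℝ × ℝ → ℝ) (hu : ContDiffOn ℝ 1 u D)
    (husol : ∀ p ∈ D,
      deriv (fun t => u (t, p.2)) p.1 + u p * deriv (fun x => u (p.1, x)) p.2 = 0)
    (hgraph : burgersGraph D u ⊆ projPhiDom s)
    (u' : ℝ × ℝ → ℝ) (hu' : ContDiffOn ℝ 1 u' D')
    (himage : projPhi s '' burgersGraph D u = burgersGraph D' u') :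
    ∀ p ∈ D',
      deriv (fun t => u' (t, p.2)) p.1 + u' p * deriv (fun x => u' (p.1, x)) p.2 = 0 :=
  stmt1_general s D D' hD hD' u (hu.differentiableOn one_ne_zero) husol hgraph u'
    (hu'.differentiableOn one_ne_zero) himage
end

section
/- Let E be a finite-dimensional real vector space and B : E × E → E a symmetric bilinear map. Then B satisfies B(v,v) ∈ ℝ·v for every v ∈ E (equivalently, B(L × L) ⊆ L for every one-dimensional subspace L of E) if and only if there exists a linear functional ξ ∈ E* such that B(u,v) = ⟨ξ,u⟩·v + ⟨ξ,v⟩·u for all u, v ∈ E. -/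
/-!
Write `B v v = c v • v`. On independent `u`, `v`, the polar form of `v ↦ B v v` is
`(c (u + v) - c u) • u + (c (u + v) - c v) • v`. Its homogeneity in `v` under one scalar `t ≠ 0, 1`,
compared coefficientwise, forces `c (u + v) = c u + c v`, so `c` is a linear functional.
Polarization then recovers `B`, with `ξ = c / 2`.
-/

/-- A radial factor of a quadratic map `Q : M → M` is a function `c` with `Q v = c v • v`, as exists
when `Q` maps every line into itself. This equation leaves `c 0` free, so it is normalized to `0`,
the only value compatible with linearity of `c`. -/
structure IsRadialFactor {R M : Type*} [CommRing R] [AddCommGroup M] [Module R M]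
    (Q : QuadraticMap R M M) (c : M → R) : Prop where
  apply_eq_smul : ∀ v, Q v = c v • v
  map_zero : c 0 = 0

namespace IsRadialFactor

section CommRing

variable {R M : Type*} [CommRing R] [AddCommGroup M] [Module R M]
  {Q : QuadraticMap R M M} {c : M → R}

theorem polar_eq (h : IsRadialFactor Q c) (u v : M) :
    QuadraticMap.polar Q u v = (c (u + v) - c u) • u + (c (u + v) - c v) • v := by
  simp only [QuadraticMap.polar, h.apply_eq_smul]
  module

end CommRing

section Field

variable {K M : Type*} [Field K] [AddCommGroup M] [Module K M]
  {Q : QuadraticMap K M M} {c : M → K}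

theorem map_smul (h : IsRadialFactor Q c) (t : K) (v : M) : c (t • v) = t * c v := by
  rcases eq_or_ne t 0 with rfl | ht
  · simp [h.map_zero]
  rcases eq_or_ne v 0 with rfl | hv
  · simp [h.map_zero]
  have hQ : (c (t • v) * t) • v = (t * c v * t) • v := by
    calc (c (t • v) * t) • v = Q (t • v) := by rw [h.apply_eq_smul, mul_smul]
      _ = (t * t) • Q v := QuadraticMap.map_smul Q t v
      _ = (t * c v * t) • v := by rw [h.apply_eq_smul, smul_smul, mul_right_comm]
  exact mul_right_cancel₀ ht (smul_left_injective K hv hQ)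

theorem map_add_of_linearIndependent (h : IsRadialFactor Q c) {t : K} (ht₀ : t ≠ 0) (ht₁ : t ≠ 1)
    {u v : M} (huv : LinearIndependent K ![u, v]) : c (u + v) = c u + c v := by
  have hpolar : (c (u + t • v) - c u) • u + ((c (u + t • v) - t * c v) * t) • v =
      (t * (c (u + v) - c u)) • u + ((c (u + v) - c v) * t) • v := by
    have hhom := QuadraticMap.polar_smul_right Q t u v
    rw [h.polar_eq, h.polar_eq, h.map_smul] at hhom
    linear_combination (norm := module) hhom
  obtain ⟨hu, hvt⟩ := huv.eq_of_pair hpolar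
  have hv : c (u + t • v) - t * c v = c (u + v) - c v := mul_right_cancel₀ ht₀ hvt
  apply mul_left_cancel₀ (sub_ne_zero.mpr ht₁)
  linear_combination hv - hu

theorem map_add (h : IsRadialFactor Q c) {t : K} (ht₀ : t ≠ 0) (ht₁ : t ≠ 1) (u v : M) :
    c (u + v) = c u + c v := by
  rcases eq_or_ne u 0 with rfl | hu
  · simp [h.map_zero]
  by_cases huv : LinearIndependent K ![u, v]
  · exact h.map_add_of_linearIndependent ht₀ ht₁ huv
  · obtain ⟨a, rfl⟩ : ∃ a : K, a • u = v := by
      simpa [LinearIndependent.pair_iff' hu] using huv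
    calc c (u + a • u) = c ((1 + a) • u) := by rw [add_smul, one_smul]
      _ = c u + c (a • u) := by rw [h.map_smul, h.map_smul, add_mul, one_mul]

end Field

end IsRadialFactor

section Field

variable {K M : Type*} [Field K] [AddCommGroup M] [Module K M] {Q : QuadraticMap K M M}

theorem exists_isRadialFactor (hQ : ∀ v, ∃ c : K, Q v = c • v) :
    ∃ c : M → K, IsRadialFactor Q c := by
  classical
  choose c hc using hQ
  refine ⟨Function.update c 0 0, fun v ↦ ?_, Function.update_self ..⟩
  rcases eq_or_ne v 0 with rfl | hv
  · simp
  · rw [Function.update_of_ne hv, hc]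

theorem exists_linearMap_apply_eq_smul {t : K} (ht₀ : t ≠ 0) (ht₁ : t ≠ 1)
    (hQ : ∀ v, ∃ c : K, Q v = c • v) : ∃ ξ : M →ₗ[K] K, ∀ v, Q v = ξ v • v := by
  obtain ⟨c, hc⟩ := exists_isRadialFactor hQ
  exact ⟨{ toFun := c, map_add' := hc.map_add ht₀ ht₁, map_smul' := hc.map_smul },
    hc.apply_eq_smul⟩

end Field

theorem apply_add_apply_swap_of_apply_self_eq_smul {R M : Type*} [CommRing R] [AddCommGroup M]
    [Module R M] {B : M →ₗ[R] M →ₗ[R] M} {ξ : M →ₗ[R] R} (hB : ∀ v, B v v = ξ v • v) (u v : M) :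
    B u v + B v u = ξ u • v + ξ v • u := by
  have hadd := hB (u + v)
  simp only [map_add, LinearMap.add_apply, hB] at hadd
  linear_combination (norm := module) hadd

theorem stmt4_general {K E : Type*} [Field K] [NeZero (2 : K)] [AddCommGroup E] [Module K E]
    (B : E →ₗ[K] E →ₗ[K] E) (hsymm : ∀ u v : E, B u v = B v u) :
    (∀ v : E, ∃ c : K, B v v = c • v) ↔
      ∃ ξ : E →ₗ[K] K, ∀ u v : E, B u v = ξ u • v + ξ v • u := by
  have two_ne : (2 : K) ≠ 0 := two_ne_zero
  constructor
  · intro hB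
    have neg_one_ne_one : (-1 : K) ≠ 1 := fun h ↦ two_ne (by linear_combination -h)
    obtain ⟨ξ, hξ⟩ : ∃ ξ : E →ₗ[K] K, ∀ v, B v v = ξ v • v :=
      exists_linearMap_apply_eq_smul (Q := LinearMap.BilinMap.toQuadraticMap B)
        (neg_ne_zero.mpr one_ne_zero) neg_one_ne_one hB
    refine ⟨(2⁻¹ : K) • ξ, fun u v ↦ ?_⟩
    have hpolar : (2 : K) • B u v = ξ u • v + ξ v • u := by
      rw [two_smul, ← apply_add_apply_swap_of_apply_self_eq_smul hξ, hsymm v u]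
    rw [← inv_smul_smul₀ two_ne (B u v), hpolar]
    simp only [LinearMap.smul_apply, smul_add, smul_assoc]
  · rintro ⟨ξ, hξ⟩ v
    exact ⟨ξ v + ξ v, by rw [hξ, add_smul]⟩

theorem stmt4 {E : Type*} [AddCommGroup E] [Module ℝ E] [FiniteDimensional ℝ E]
    (B : E →ₗ[ℝ] E →ₗ[ℝ] E) (hsymm : ∀ u v : E, B u v = B v u) :
    (∀ v : E, ∃ c : ℝ, B v v = c • v) ↔
      ∃ ξ : E →ₗ[ℝ] ℝ, ∀ u v : E, B u v = ξ u • v + ξ v • u :=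
  stmt4_general B hsymm
end

section
/- Let E be a real vector space of finite dimension m ≥ 1 and let Sym²(E;E) denote the space of symmetric bilinear maps B : E × E → E. Define Q : Sym²(E;E) → Sym²(E;E) by (QB)(u,v) = (m+1)⁻¹·tr[B(u,·)]·v + (m+1)⁻¹·tr[B(v,·)]·u, where B(u,·) : E → E is the linear map v ↦ B(u,v). Then Q is linear, Q ∘ Q = Q, the range of Q is exactly the set of B ∈ Sym²(E;E) of the form B(u,v) = ⟨ξ,u⟩v + ⟨ξ,v⟩u for some ξ ∈ E* (equivalently, those B with B(v,v) ∈ ℝ·v for all v), and the kernel of Q is { B ∈ Sym²(E;E) : tr[B(u,·)] = 0 for all u ∈ E }. -/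
/-!
Write `ξ ⊙ id` for the bilinear map `(u, v) ↦ ξ u • v + ξ v • u`. The trace of `(ξ ⊙ id)(u, ·)` is
`(m + 1) ξ u`, the summand `m` coming from the identity and `1` from the rank-one map `v ↦ ξ v • u`.
So `ξ ↦ ξ ⊙ id` followed by the trace is multiplication by the invertible scalar `m + 1`, and
composing the two maps in the other order, rescaled by `(m + 1)⁻¹`, gives a projection whose range
is that of `ξ ↦ ξ ⊙ id` and whose kernel is that of the trace.
-/

open LinearMap (BilinMap)
open Module (Dual finrank)

section Semiring

variable {R E : Type*} [CommSemiring R] [AddCommMonoid E] [Module R E]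

variable (R E) in
/-- The symmetric product with the identity, sending a linear form `ξ` to the bilinear map
`(u, v) ↦ ξ u • v + ξ v • u`. It is not divided by two, so that it makes sense in every
characteristic. -/
def symmMulId : Dual R E →ₗ[R] BilinMap R E E :=
  let mulId : Dual R E →ₗ[R] BilinMap R E E := (LinearMap.lsmul R E).compRight R
  mulId + LinearMap.lflip.toLinearMap ∘ₗ mulId

variable (R E) in
/-- The contraction of a bilinear map `B : E × E → E` to the linear form `u ↦ tr B(u, ·)`. -/
noncomputable def traceContraction : BilinMap R E E →ₗ[R] Dual R E :=
  (LinearMap.trace R E).compRight R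

variable (E) in
/-- The pure trace part `c • (tr B ⊙ id)` of a bilinear map `B : E × E → E`. The normalization `c`
is kept as a parameter; it is a projection when `c` is the inverse of `finrank R E + 1`. -/
noncomputable def pureTracePart (c : R) : BilinMap R E E →ₗ[R] BilinMap R E E :=
  c • symmMulId R E ∘ₗ traceContraction R E

@[simp]
lemma symmMulId_apply (ξ : Dual R E) (u v : E) : symmMulId R E ξ u v = ξ u • v + ξ v • u := rfl

@[simp]
lemma traceContraction_apply (B : BilinMap R E E) (u : E) :
    traceContraction R E B u = LinearMap.trace R E (B u) := rfl

lemma symmMulId_apply_comm (ξ : Dual R E) (u v : E) :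
    symmMulId R E ξ u v = symmMulId R E ξ v u :=
  add_comm _ _

lemma eq_symmMulId_iff {B : BilinMap R E E} {ξ : Dual R E} :
    B = symmMulId R E ξ ↔ ∀ u v, B u v = ξ u • v + ξ v • u :=
  LinearMap.ext_iff₂

lemma pureTracePart_eq_symmMulId (c : R) (B : BilinMap R E E) :
    pureTracePart E c B = symmMulId R E (c • traceContraction R E B) :=
  (map_smul (symmMulId R E) c _).symm

lemma pureTracePart_apply (c : R) (B : BilinMap R E E) (u v : E) :
    pureTracePart E c B u v =
      (c * LinearMap.trace R E (B u)) • v + (c * LinearMap.trace R E (B v)) • u := by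
  simp [pureTracePart_eq_symmMulId, mul_smul]

end Semiring

section Ring

variable {R E : Type*} [CommRing R] [AddCommGroup E] [Module R E] [Module.Free R E]
  [Module.Finite R E]

lemma traceContraction_symmMulId (ξ : Dual R E) :
    traceContraction R E (symmMulId R E ξ) = (finrank R E + 1 : R) • ξ := by
  ext u
  have slice : symmMulId R E ξ u = ξ u • LinearMap.id + ξ.smulRight u := rfl
  calc LinearMap.trace R E (symmMulId R E ξ u)
      = ξ u * finrank R E + ξ u := by
        rw [slice, map_add, map_smul, LinearMap.trace_id, LinearMap.trace_smulRight, smul_eq_mul]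
    _ = (finrank R E + 1) * ξ u := by ring

variable {c : R}

lemma pureTracePart_symmMulId (hc : c * (finrank R E + 1) = 1) (ξ : Dual R E) :
    pureTracePart E c (symmMulId R E ξ) = symmMulId R E ξ := by
  rw [pureTracePart_eq_symmMulId, traceContraction_symmMulId, smul_smul, hc, one_smul]

lemma isIdempotentElem_pureTracePart (hc : c * (finrank R E + 1) = 1) :
    IsIdempotentElem (pureTracePart E c) := by
  ext1 B
  rw [Module.End.mul_apply, pureTracePart_eq_symmMulId c B, pureTracePart_symmMulId hc]

lemma image_pureTracePart_symmetric (hc : c * (finrank R E + 1) = 1) :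
    pureTracePart E c '' {B | ∀ u v, B u v = B v u} = Set.range (symmMulId R E) := by
  apply Set.Subset.antisymm
  · rintro _ ⟨B, -, rfl⟩
    exact ⟨_, (pureTracePart_eq_symmMulId c B).symm⟩
  · rintro _ ⟨ξ, rfl⟩
    exact ⟨_, symmMulId_apply_comm ξ, pureTracePart_symmMulId hc ξ⟩

lemma traceContraction_pureTracePart (hc : c * (finrank R E + 1) = 1) (B : BilinMap R E E) :
    traceContraction R E (pureTracePart E c B) = traceContraction R E B := by
  rw [pureTracePart_eq_symmMulId, traceContraction_symmMulId, smul_smul, mul_comm, hc, one_smul]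

lemma ker_pureTracePart (hc : c * (finrank R E + 1) = 1) :
    (pureTracePart E c).ker = (traceContraction R E).ker := by
  ext B
  simp only [LinearMap.mem_ker]
  constructor <;> intro h
  · rw [← traceContraction_pureTracePart hc, h, map_zero]
  · rw [pureTracePart_eq_symmMulId, h, smul_zero, map_zero]

lemma pureTracePart_eq_zero_iff (hc : c * (finrank R E + 1) = 1) {B : BilinMap R E E} :
    pureTracePart E c B = 0 ↔ ∀ u, LinearMap.trace R E (B u) = 0 := by
  rw [← LinearMap.mem_ker, ker_pureTracePart hc, LinearMap.mem_ker]
  exact LinearMap.ext_iff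

end Ring

theorem stmt5_general {R E : Type*} [CommRing R] [AddCommGroup E] [Module R E] [Module.Free R E]
    [Module.Finite R E] {c : R} (hc : c * (finrank R E + 1) = 1)
    (Q : BilinMap R E E → BilinMap R E E)
    (hQ : ∀ B u v, Q B u v =
      (c * LinearMap.trace R E (B u)) • v + (c * LinearMap.trace R E (B v)) • u) :
    (∀ B C, Q (B + C) = Q B + Q C) ∧
    (∀ (a : R) B, Q (a • B) = a • Q B) ∧
    (∀ B, (∀ u v, Q B u v = Q B v u) ∧ Q (Q B) = Q B) ∧
    {C | ∃ B : BilinMap R E E, (∀ u v, B u v = B v u) ∧ Q B = C} =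
      {C | ∃ ξ : Dual R E, ∀ u v, C u v = ξ u • v + ξ v • u} ∧
    (∀ B, Q B = 0 ↔ ∀ u, LinearMap.trace R E (B u) = 0) := by
  obtain rfl : Q = pureTracePart E c :=
    funext fun B ↦ LinearMap.ext₂ fun u v ↦ (hQ B u v).trans (pureTracePart_apply c B u v).symm
  refine ⟨map_add _, map_smul _, fun B ↦ ⟨?symmetric, ?idempotent⟩, ?range,
    fun B ↦ pureTracePart_eq_zero_iff hc⟩
  case symmetric =>
    rw [pureTracePart_eq_symmMulId]
    exact symmMulId_apply_comm _
  case idempotent => exact LinearMap.congr_fun (isIdempotentElem_pureTracePart hc) B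
  case range =>
    simp only [← eq_symmMulId_iff, eq_comm (b := symmMulId R E _)]
    exact image_pureTracePart_symmetric hc

theorem stmt5 {E : Type*} [AddCommGroup E] [Module ℝ E] [FiniteDimensional ℝ E]
    (m : ℕ) (hm : 1 ≤ m) (hdim : Module.finrank ℝ E = m)
    (Q : (E →ₗ[ℝ] E →ₗ[ℝ] E) → (E →ₗ[ℝ] E →ₗ[ℝ] E))
    (hQ : ∀ B : E →ₗ[ℝ] E →ₗ[ℝ] E, ∀ u v : E,
      Q B u v = (((m : ℝ) + 1)⁻¹ * LinearMap.trace ℝ E (B u)) • v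
        + (((m : ℝ) + 1)⁻¹ * LinearMap.trace ℝ E (B v)) • u) :
    (∀ B C : E →ₗ[ℝ] E →ₗ[ℝ] E, Q (B + C) = Q B + Q C) ∧
    (∀ (c : ℝ) (B : E →ₗ[ℝ] E →ₗ[ℝ] E), Q (c • B) = c • Q B) ∧
    (∀ B : E →ₗ[ℝ] E →ₗ[ℝ] E, (∀ u v : E, B u v = B v u) →
      (∀ u v : E, Q B u v = Q B v u) ∧ Q (Q B) = Q B) ∧
    ({C | ∃ B : E →ₗ[ℝ] E →ₗ[ℝ] E, (∀ u v : E, B u v = B v u) ∧ Q B = C}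
      = {C : E →ₗ[ℝ] E →ₗ[ℝ] E |
          ∃ ξ : E →ₗ[ℝ] ℝ, ∀ u v : E, C u v = ξ u • v + ξ v • u}) ∧
    (∀ B : E →ₗ[ℝ] E →ₗ[ℝ] E, (∀ u v : E, B u v = B v u) →
      (Q B = 0 ↔ ∀ u : E, LinearMap.trace ℝ E (B u) = 0)) := by
  have ⟨hadd, hsmul, hproj, hrange, hker⟩ := stmt5_general (by rw [hdim]; field_simp) Q hQ
  exact ⟨hadd, hsmul, fun B _ ↦ hproj B, hrange, fun B _ ↦ hker B⟩
end

section
/- Let U ⊆ ℝ² be open, G ⊆ U × ℝ open, and X¹, X², X³ : G → ℝ of class C¹ with X¹(z,y) ≠ 0 for all (z,y) ∈ G. Write R(z,y) = X²(z,y)/X¹(z,y). Suppose there exist functions a, b, c, d : U → ℝ such that for all (z,y) ∈ G (with z = (z₁,z₂)): ∂R/∂z₁(z,y) + R(z,y)·∂R/∂z₂(z,y) + (X³(z,y)/X¹(z,y))·∂R/∂y(z,y) = a(z)·R(z,y)³ + b(z)·R(z,y)² + c(z)·R(z,y) + d(z). If v : U → ℝ is a C¹ function with (z, v(z)) ∈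 G for all z ∈ U satisfying X¹(z,v(z))·∂v/∂z₁(z) + X²(z,v(z))·∂v/∂z₂(z) = X³(z,v(z)), then the function u(z) := X²(z,v(z))/X¹(z,v(z)) satisfies, writing t = z₁ and x = z₂: ∂u/∂t + u·∂u/∂x = a(t,x)·u³ + b(t,x)·u² + c(t,x)·u + d(t,x) on U. -/
/-!
On a solution, `∂v/∂z₁ + R ∂v/∂z₂ = X³/X¹`, so the graph map `z ↦ (z, v z)` sends the direction
`(1, u z)` to the characteristic direction `(1, R, X³/X¹)` at `(z, v z)`. As `u` is the pullback of
`R` along the graph map, `∂u/∂t + u ∂u/∂x` is the derivative of `R` in the characteristic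
direction, which is prescribed by hypothesis.
-/

section

variable {𝕜 E F H W : Type*} [NontriviallyNormedField 𝕜] [NormedAddCommGroup E] [NormedSpace 𝕜 E]
  [NormedAddCommGroup F] [NormedSpace 𝕜 F] [NormedAddCommGroup H] [NormedSpace 𝕜 H]
  [NormedAddCommGroup W] [NormedSpace 𝕜 W]

theorem fderiv_apply_prodMk {f : E × F → W} {p : E × F} (hf : DifferentiableAt 𝕜 f p)
    (h : E) (k : F) :
    fderiv 𝕜 f p (h, k) =
      fderiv 𝕜 (fun x => f (x, p.2)) p.1 h + fderiv 𝕜 (fun y => f (p.1, y)) p.2 k := by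
  have hfst : HasFDerivAt (fun x => f (x, p.2)) _ p.1 :=
    hf.hasFDerivAt.comp p.1 (hasFDerivAt_prodMk_left p.1 p.2)
  have hsnd : HasFDerivAt (fun y => f (p.1, y)) _ p.2 :=
    hf.hasFDerivAt.comp p.2 (hasFDerivAt_prodMk_right p.1 p.2)
  rw [hfst.fderiv, hsnd.fderiv]
  exact ((fderiv 𝕜 f p).comp_inl_add_comp_inr (h, k)).symm

theorem fderiv_apply_pair_eq_deriv {f : 𝕜 × 𝕜 → W} {z : 𝕜 × 𝕜} (hf : DifferentiableAt 𝕜 f z)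
    (h k : 𝕜) :
    fderiv 𝕜 f z (h, k) =
      h • deriv (fun s => f (s, z.2)) z.1 + k • deriv (fun s => f (z.1, s)) z.2 := by
  rw [fderiv_apply_prodMk hf, fderiv_eq_smul_deriv, fderiv_eq_smul_deriv]

theorem fderiv_apply_triple_eq_deriv {f : 𝕜 × 𝕜 × 𝕜 → W} {p : 𝕜 × 𝕜 × 𝕜}
    (hf : DifferentiableAt 𝕜 f p) (h k l : 𝕜) :
    fderiv 𝕜 f p (h, k, l) =
      h • deriv (fun s => f (s, p.2.1, p.2.2)) p.1 + k • deriv (fun s => f (p.1, s, p.2.2)) p.2.1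
        + l • deriv (fun s => f (p.1, p.2.1, s)) p.2.2 := by
  have hslice : DifferentiableAt 𝕜 (fun q => f (p.1, q)) p.2 :=
    hf.comp p.2 (hasFDerivAt_prodMk_right p.1 p.2).differentiableAt
  rw [fderiv_apply_prodMk hf, fderiv_eq_smul_deriv, fderiv_apply_pair_eq_deriv hslice, add_assoc]

theorem hasFDerivAt_comp_graph {f : E × F × H → W} {f' : E × F × H →L[𝕜] W} {v : E × F → H}
    {v' : E × F →L[𝕜] H} {z : E × F} (hf : HasFDerivAt f f' (z.1, z.2, v z))
    (hv : HasFDerivAt v v' z) :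
    HasFDerivAt (fun z => f (z.1, z.2, v z))
      (f' ∘L (ContinuousLinearMap.fst 𝕜 E F).prod ((ContinuousLinearMap.snd 𝕜 E F).prod v')) z :=
  hf.comp (f := fun z : E × F => (z.1, z.2, v z)) z
    (hasFDerivAt_fst.prodMk (hasFDerivAt_snd.prodMk hv))

theorem deriv_add_smul_deriv_comp_graph {f : 𝕜 × 𝕜 × 𝕜 → W} {v : 𝕜 × 𝕜 → 𝕜} {z : 𝕜 × 𝕜}
    (hf : DifferentiableAt 𝕜 f (z.1, z.2, v z)) (hv : DifferentiableAt 𝕜 v z) (r : 𝕜) :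
    deriv (fun s => f (s, z.2, v (s, z.2))) z.1 + r • deriv (fun s => f (z.1, s, v (z.1, s))) z.2
      = deriv (fun s => f (s, z.2, v z)) z.1 + r • deriv (fun s => f (z.1, s, v z)) z.2
        + (deriv (fun s => v (s, z.2)) z.1 + r * deriv (fun s => v (z.1, s)) z.2)
          • deriv (fun s => f (z.1, z.2, s)) (v z) := by
  have hcomp := hasFDerivAt_comp_graph hf.hasFDerivAt hv.hasFDerivAt
  calc
    _ = fderiv 𝕜 (fun z => f (z.1, z.2, v z)) z (1, r) := by
      rw [fderiv_apply_pair_eq_deriv hcomp.differentiableAt, one_smul]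
    _ = fderiv 𝕜 f (z.1, z.2, v z) (1, r, fderiv 𝕜 v z (1, r)) := by
      rw [hcomp.fderiv]
      rfl
    _ = _ := by
      rw [fderiv_apply_triple_eq_deriv hf, fderiv_apply_pair_eq_deriv hv, one_smul, one_smul,
        smul_eq_mul]

theorem stmt8_general {U : Set (𝕜 × 𝕜)} (hU : IsOpen U) {G : Set (𝕜 × 𝕜 × 𝕜)} (hG : IsOpen G)
    {X1 X2 X3 : 𝕜 × 𝕜 × 𝕜 → 𝕜} (hX1 : DifferentiableOn 𝕜 X1 G) (hX2 : DifferentiableOn 𝕜 X2 G)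
    (hX1ne : ∀ p ∈ G, X1 p ≠ 0) {R : 𝕜 × 𝕜 × 𝕜 → 𝕜} (hR : ∀ p, R p = X2 p / X1 p)
    {Φ : 𝕜 × 𝕜 → 𝕜 → 𝕜}
    (hΦ : ∀ p ∈ G,
      deriv (fun s => R (s, p.2.1, p.2.2)) p.1
        + R p * deriv (fun s => R (p.1, s, p.2.2)) p.2.1
        + (X3 p / X1 p) * deriv (fun s => R (p.1, p.2.1, s)) p.2.2
      = Φ (p.1, p.2.1) (R p))
    {v : 𝕜 × 𝕜 → 𝕜} (hv : DifferentiableOn 𝕜 v U) (hvG : ∀ z ∈ U, (z.1, z.2, v z) ∈ G)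
    (hvsol : ∀ z ∈ U,
      X1 (z.1, z.2, v z) * deriv (fun s => v (s, z.2)) z.1
        + X2 (z.1, z.2, v z) * deriv (fun s => v (z.1, s)) z.2
      = X3 (z.1, z.2, v z))
    {u : 𝕜 × 𝕜 → 𝕜} (hu : ∀ z, u z = X2 (z.1, z.2, v z) / X1 (z.1, z.2, v z)) :
    ∀ z ∈ U,
      deriv (fun s => u (s, z.2)) z.1 + u z * deriv (fun s => u (z.1, s)) z.2 = Φ z (u z) := by
  intro z hz
  have hp := hvG z hz
  have hne := hX1ne _ hp
  have hR_diff : DifferentiableAt 𝕜 R (z.1, z.2, v z) := by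
    rw [funext hR]
    simp only [div_eq_mul_inv]
    exact (hX2.differentiableAt (hG.mem_nhds hp)).fun_mul
      ((hX1.differentiableAt (hG.mem_nhds hp)).fun_inv hne)
  have hu_eq : u = fun z => R (z.1, z.2, v z) := funext fun z => (hu z).trans (hR _).symm
  have hv_char : deriv (fun s => v (s, z.2)) z.1
      + R (z.1, z.2, v z) * deriv (fun s => v (z.1, s)) z.2
      = X3 (z.1, z.2, v z) / X1 (z.1, z.2, v z) := by
    rw [hR, ← hvsol z hz]
    field_simp
  have hu_char := deriv_add_smul_deriv_comp_graph hR_diff (hv.differentiableAt (hU.mem_nhds hz))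
    (R (z.1, z.2, v z))
  simp only [smul_eq_mul, hv_char] at hu_char
  rw [hu_eq]
  exact hu_char.trans (hΦ _ hp)

end

theorem stmt8
    (U : Set (ℝ × ℝ)) (hU : IsOpen U)
    (G : Set (ℝ × ℝ × ℝ)) (hG : IsOpen G)
    (hGU : ∀ p ∈ G, (p.1, p.2.1) ∈ U)
    (X1 X2 X3 : ℝ × ℝ × ℝ → ℝ)
    (hX1 : ContDiffOn ℝ 1 X1 G) (hX2 : ContDiffOn ℝ 1 X2 G) (hX3 : ContDiffOn ℝ 1 X3 G)
    (hX1ne : ∀ p ∈ G, X1 p ≠ 0)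
    (R : ℝ × ℝ × ℝ → ℝ) (hR : ∀ p, R p = X2 p / X1 p)
    (a b c d : ℝ × ℝ → ℝ)
    (habcd : ∀ p ∈ G,
      deriv (fun s => R (s, p.2.1, p.2.2)) p.1
        + R p * deriv (fun s => R (p.1, s, p.2.2)) p.2.1
        + (X3 p / X1 p) * deriv (fun s => R (p.1, p.2.1, s)) p.2.2
      = a (p.1, p.2.1) * R p ^ 3 + b (p.1, p.2.1) * R p ^ 2
          + c (p.1, p.2.1) * R p + d (p.1, p.2.1))
    (v : ℝ × ℝ → ℝ) (hv : ContDiffOn ℝ 1 v U)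
    (hvG : ∀ z ∈ U, (z.1, z.2, v z) ∈ G)
    (hvsol : ∀ z ∈ U,
      X1 (z.1, z.2, v z) * deriv (fun s => v (s, z.2)) z.1
        + X2 (z.1, z.2, v z) * deriv (fun s => v (z.1, s)) z.2
      = X3 (z.1, z.2, v z))
    (u : ℝ × ℝ → ℝ) (hu : ∀ z, u z = X2 (z.1, z.2, v z) / X1 (z.1, z.2, v z)) :
    ∀ z ∈ U,
      deriv (fun s => u (s, z.2)) z.1 + u z * deriv (fun s => u (z.1, s)) z.2
        = a z * u z ^ 3 + b z * u z ^ 2 + c z * u z + d z :=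
  stmt8_general (Φ := fun z y => a z * y ^ 3 + b z * y ^ 2 + c z * y + d z) hU hG
    (hX1.differentiableOn one_ne_zero) (hX2.differentiableOn one_ne_zero) hX1ne hR habcd
    (hv.differentiableOn one_ne_zero) hvG hvsol hu
end

section
/- Let m ≥ 1, let ν : ℝᵐ → ℝ be a linear functional, let u₋ ≠ u₊ be real numbers, let I = [min(u₋,u₊), max(u₋,u₊)], and let X : I → ℝᵐ be continuous. Suppose that for every k ∈ I: ⟨ν, ∫_{|k,u₊|} X(y) dy⟩ ≤ ⟨ν, ∫_{|u₋,k|} X(y) dy⟩, where ∫_{|a,b|} denotes the integral over the unoriented interval [min(a,b), max(a,b)]. Then: (i) the Rankine–Hugoniot identity ⟨ν, ∫_{|u₋,u₊|} X(y) dy⟩ = 0 holds; (ii) ⟨ν, X(u₊)⟩ ≤ 0; and (iii) ⟨ν, X(u₋)⟩ ≥ 0. -/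
open MeasureTheory

/-!
Taking `k = um` and `k = up` in the entropy inequality gives both inequalities of the
Rankine–Hugoniot identity. By additivity the two sides of the inequality at `k` then have sum zero,
so the left one is nonpositive and the right one nonnegative. Letting `k` tend to either endpoint
forces the sign of `ν ∘ X` there, since otherwise `ν ∘ X` would have the wrong strict sign on a
whole interval ending at that point.
-/

open Set Filter Topology

section UIcc

variable {α : Type*} [LinearOrder α] {a b k : α}

theorem uIcc_union_uIcc_eq_uIcc (hk : k ∈ uIcc a b) : uIcc a k ∪ uIcc k b = uIcc a b :=
  (union_subset (uIcc_subset_uIcc_left hk) (uIcc_subset_uIcc_right hk)).antisymm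
    uIcc_subset_uIcc_union_uIcc

theorem uIcc_inter_uIcc_eq_singleton (hk : k ∈ uIcc a b) : uIcc a k ∩ uIcc k b = {k} := by
  rcases mem_uIcc.1 hk with ⟨hak, hkb⟩ | ⟨hbk, hka⟩
  · rw [uIcc_of_le hak, uIcc_of_le hkb, Icc_inter_Icc_eq_singleton hak hkb]
  · rw [uIcc_of_ge hka, uIcc_of_ge hbk, inter_comm, Icc_inter_Icc_eq_singleton hbk hka]

theorem exists_uIcc_subset_of_mem_nhdsWithin [TopologicalSpace α] [OrderTopology α]
    [DenselyOrdered α] {s : Set α} (hab : a ≠ b) (hs : s ∈ 𝓝[uIcc a b] a) :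
    ∃ k ∈ uIoo a b, uIcc a k ⊆ s := by
  have hsmall : ∀ᶠ k in 𝓝[uIcc a b] a, uIcc a k ⊆ s :=
    tendsto_smallSets_iff.1
      ((tendsto_const_pure.mono_right (pure_le_nhdsWithin left_mem_uIcc)).uIcc tendsto_id) s hs
  have hne : (𝓝[uIoo a b] a).NeBot := by
    rw [← mem_closure_iff_nhdsWithin_neBot, closure_uIoo hab]
    exact left_mem_uIcc
  exact (eventually_mem_nhdsWithin.and
    (hsmall.filter_mono (nhdsWithin_mono a uIoo_subset_uIcc_self))).exists

end UIcc

theorem setIntegral_pos_of_forall_pos {α : Type*} [MeasurableSpace α] {μ : Measure α}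
    {s : Set α} {f : α → ℝ} (hs : MeasurableSet s) (hμs : 0 < μ s) (hfi : IntegrableOn f s μ)
    (hf : ∀ x ∈ s, 0 < f x) : 0 < ∫ x in s, f x ∂μ := by
  have hsupp : s ⊆ Function.support f := fun x hx ↦ (hf x hx).ne'
  rw [setIntegral_pos_iff_support_of_nonneg_ae
    (ae_restrict_of_forall_mem hs fun x hx ↦ (hf x hx).le) hfi, inter_eq_right.2 hsupp]
  exact hμs

section SetIntegral

variable {α E : Type*} [LinearOrder α] [TopologicalSpace α] [MeasurableSpace α]
  [OpensMeasurableSpace α] {μ : Measure α} [NormedAddCommGroup E] [NormedSpace ℝ E] {a b : α}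

theorem setIntegral_uIcc_add_setIntegral_uIcc [OrderClosedTopology α] [NullSingletonClass μ]
    {X : α → E} {k : α} (hX : IntegrableOn X (uIcc a b) μ) (hk : k ∈ uIcc a b) :
    ∫ y in uIcc a k, X y ∂μ + ∫ y in uIcc k b, X y ∂μ = ∫ y in uIcc a b, X y ∂μ := by
  have hdisj : AEDisjoint μ (uIcc a k) (uIcc k b) := by
    rw [AEDisjoint, uIcc_inter_uIcc_eq_singleton hk, measure_singleton]
  rw [← uIcc_union_uIcc_eq_uIcc hk, setIntegral_union₀ hdisj measurableSet_uIcc.nullMeasurableSet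
    (hX.mono_set (uIcc_subset_uIcc_left hk)) (hX.mono_set (uIcc_subset_uIcc_right hk))]

variable [OrderTopology α] [DenselyOrdered α] [μ.IsOpenPosMeasure]

theorem nonpos_of_forall_setIntegral_uIcc_nonpos {f : α → ℝ} (hab : a ≠ b)
    (hfi : IntegrableOn f (uIcc a b) μ) (hfa : ContinuousWithinAt f (uIcc a b) a)
    (hf : ∀ k ∈ uIcc a b, ∫ y in uIcc a k, f y ∂μ ≤ 0) : f a ≤ 0 := by
  by_contra! hpos
  obtain ⟨k, hk, hfk⟩ := exists_uIcc_subset_of_mem_nhdsWithin hab (hfa.eventually_const_lt hpos)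
  have hkab : k ∈ uIcc a b := uIoo_subset_uIcc_self hk
  have hak : a ≠ k := by
    rintro rfl
    exact left_notMem_uIoo hk
  have hμ : 0 < μ (uIcc a k) :=
    (isOpen_Ioo.measure_pos μ (nonempty_uIoo.2 hak)).trans_le (measure_mono uIoo_subset_uIcc_self)
  exact (hf k hkab).not_gt <| setIntegral_pos_of_forall_pos measurableSet_uIcc hμ
    (hfi.mono_set (uIcc_subset_uIcc_left hkab)) hfk

variable [CompleteSpace E] {X : α → E}

theorem map_nonpos_of_forall_map_setIntegral_uIcc_nonpos (ν : E →L[ℝ] ℝ) (hab : a ≠ b)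
    (hX : IntegrableOn X (uIcc a b) μ) (hXa : ContinuousWithinAt X (uIcc a b) a)
    (h : ∀ k ∈ uIcc a b, ν (∫ y in uIcc a k, X y ∂μ) ≤ 0) : ν (X a) ≤ 0 := by
  refine nonpos_of_forall_setIntegral_uIcc_nonpos (f := fun y ↦ ν (X y)) hab
    (ν.integrable_comp hX) (ν.continuous.continuousAt.comp_continuousWithinAt hXa) fun k hk ↦ ?_
  rw [ν.integral_comp_comm (hX.mono_set (uIcc_subset_uIcc_left hk))]
  exact h k hk

theorem stmt10_general [NullSingletonClass μ] (ν : E →L[ℝ] ℝ) {um up : α} (hne : um ≠ up)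
    (hX : IntegrableOn X (uIcc um up) μ) (hXm : ContinuousWithinAt X (uIcc um up) um)
    (hXp : ContinuousWithinAt X (uIcc um up) up)
    (hent : ∀ k ∈ uIcc um up, ν (∫ y in uIcc k up, X y ∂μ) ≤ ν (∫ y in uIcc um k, X y ∂μ)) :
    ν (∫ y in uIcc um up, X y ∂μ) = 0 ∧ ν (X up) ≤ 0 ∧ 0 ≤ ν (X um) := by
  have hRH : ν (∫ y in uIcc um up, X y ∂μ) = 0 := by
    apply le_antisymm
    · simpa using hent um left_mem_uIcc
    · simpa using hent up right_mem_uIcc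
  have hsum : ∀ k ∈ uIcc um up,
      ν (∫ y in uIcc um k, X y ∂μ) + ν (∫ y in uIcc k up, X y ∂μ) = 0 := fun k hk ↦ by
    rw [← map_add, setIntegral_uIcc_add_setIntegral_uIcc hX hk, hRH]
  refine ⟨hRH, ?_, ?_⟩
  · rw [uIcc_comm] at hX hXp
    refine map_nonpos_of_forall_map_setIntegral_uIcc_nonpos ν hne.symm hX hXp fun k hk ↦ ?_
    rw [uIcc_comm] at hk ⊢
    linarith [hent k hk, hsum k hk]
  · refine neg_nonpos.1 (map_nonpos_of_forall_map_setIntegral_uIcc_nonpos (-ν) hne hX hXm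
      fun k hk ↦ ?_)
    rw [neg_apply]
    linarith [hent k hk, hsum k hk]

end SetIntegral

theorem stmt10 (m : ℕ) (hm : 1 ≤ m) (ν : (Fin m → ℝ) →ₗ[ℝ] ℝ)
    (um up : ℝ) (hne : um ≠ up)
    (X : ℝ → (Fin m → ℝ)) (hX : ContinuousOn X (Set.uIcc um up))
    (hent : ∀ k ∈ Set.uIcc um up,
      ν (∫ y in Set.uIcc k up, X y) ≤ ν (∫ y in Set.uIcc um k, X y)) :
    ν (∫ y in Set.uIcc um up, X y) = 0 ∧ ν (X up) ≤ 0 ∧ 0 ≤ ν (X um) :=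
  stmt10_general ν.toContinuousLinearMap hne (hX.integrableOn_compact isCompact_uIcc)
    (hX um Set.left_mem_uIcc) (hX up Set.right_mem_uIcc) hent
end

section
/- Let u₋ ≠ u₊ be real numbers, I = [min(u₋,u₊), max(u₋,u₊)], β : I → ℝ continuous with β(y) > 0 for all y ∈ I, ν = (ν₁,ν₂) a linear functional on ℝ², and define X(y) = β(y)·(1, y) ∈ ℝ². Suppose the Rankine–Hugoniot identity ⟨ν, ∫_{|u₋,u₊|} X(y) dy⟩ = 0 holds together with ⟨ν, X(u₊)⟩ ≤ 0 and ⟨ν, X(u₋)⟩ ≥ 0. Then for every k ∈ I: ⟨ν, ∫_{|k,u₊|} X(y) dy⟩ ≤ ⟨ν, ∫_{|u₋,k|} X(y) dy⟩, where ∫_{|a,b|} denotes the integral over the unoriented interval [min(a,b), max(a,b)]. -/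
open MeasureTheory

/-!
The functional `⟨ν, X(y)⟩ = (ν₁ + ν₂ y) β(y)` has the sign of an affine function of `y`, which is
nonnegative at `u₋` and nonpositive at `u₊` and changes sign at most once in between. So for `k` in
the interval either the integrand is nonnegative all the way from `u₋` to `k`, or it is nonpositive
all the way from `k` to `u₊`. As the total integral vanishes, each alternative forces
`⟨ν, ∫_{|k,u₊|} X⟩ ≤ 0 ≤ ⟨ν, ∫_{|u₋,k|} X⟩`.
-/

open Set

section Quasilinear

variable {𝕜 : Type*} [Field 𝕜] [LinearOrder 𝕜] [IsStrictOrderedRing 𝕜]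

theorem forall_uIcc_le_or_forall_uIcc_ge_of_quasilinearOn {α : Type*} [LinearOrder α]
    {f : 𝕜 → α} {a b k : 𝕜} {r : α} (hf : QuasilinearOn 𝕜 (uIcc a b) f)
    (ha : r ≤ f a) (hb : f b ≤ r) (hk : k ∈ uIcc a b) :
    (∀ y ∈ uIcc a k, r ≤ f y) ∨ ∀ y ∈ uIcc k b, f y ≤ r := by
  rcases le_total r (f k) with hrk | hkr
  · exact .inl fun y hy ↦ ((hf.2 r).ordConnected.uIcc_subset ⟨left_mem_uIcc, ha⟩ ⟨hk, hrk⟩ hy).2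
  · exact .inr fun y hy ↦ ((hf.1 r).ordConnected.uIcc_subset ⟨hk, hkr⟩ ⟨right_mem_uIcc, hb⟩ hy).2

theorem quasilinearOn_const_add_const_mul {s : Set 𝕜} (hs : Convex 𝕜 s) (p q : 𝕜) :
    QuasilinearOn 𝕜 s fun y ↦ p + q * y := by
  rcases le_total 0 q with hq | hq
  · exact ((monotone_mul_left_of_nonneg hq).const_add p |>.monotoneOn s).quasilinearOn hs
  · exact ((antitone_mul_left hq).const_add p |>.antitoneOn s).quasilinearOn hs

end Quasilinear

theorem setIntegral_nonneg_of_nonneg_or_sdiff_nonpos {α : Type*} [MeasurableSpace α]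
    {μ : Measure α} {f : α → ℝ} {s t : Set α} (hs : MeasurableSet s) (ht : MeasurableSet t)
    (hts : t ⊆ s) (hf : IntegrableOn f s μ) (hfs : 0 ≤ ∫ x in s, f x ∂μ)
    (h : (∀ x ∈ t, 0 ≤ f x) ∨ ∀ x ∈ s \ t, f x ≤ 0) : 0 ≤ ∫ x in t, f x ∂μ := by
  rcases h with hnonneg | hnonpos
  · exact setIntegral_nonneg ht hnonneg
  · have hdiff := setIntegral_nonpos (μ := μ) (hs.diff ht) hnonpos
    rw [setIntegral_sdiff ht hf hts] at hdiff
    linarith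

section UIcc

variable {μ : Measure ℝ} {g β : ℝ → ℝ} {a b k : ℝ}

theorem setIntegral_uIcc_left_mul_nonneg (hg : QuasilinearOn ℝ (uIcc a b) g)
    (hβ : ∀ y ∈ uIcc a b, 0 ≤ β y) (hgβ : IntegrableOn (fun y ↦ g y * β y) (uIcc a b) μ)
    (ha : 0 ≤ g a) (hb : g b ≤ 0) (htotal : 0 ≤ ∫ y in uIcc a b, g y * β y ∂μ)
    (hk : k ∈ uIcc a b) : 0 ≤ ∫ y in uIcc a k, g y * β y ∂μ := by
  have hleft : uIcc a k ⊆ uIcc a b := uIcc_subset_uIcc_left hk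
  have hdiff : uIcc a b \ uIcc a k ⊆ uIcc k b := sdiff_subset_iff.2 uIcc_subset_uIcc_union_uIcc
  refine setIntegral_nonneg_of_nonneg_or_sdiff_nonpos measurableSet_uIcc measurableSet_uIcc hleft
    hgβ htotal ?_
  refine (forall_uIcc_le_or_forall_uIcc_ge_of_quasilinearOn hg ha hb hk).imp ?_ ?_
  · exact fun hpos y hy ↦ mul_nonneg (hpos y hy) (hβ y (hleft hy))
  · exact fun hneg y hy ↦ mul_nonpos_of_nonpos_of_nonneg (hneg y (hdiff hy)) (hβ y hy.1)

theorem setIntegral_uIcc_right_mul_nonpos (hg : QuasilinearOn ℝ (uIcc a b) g)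
    (hβ : ∀ y ∈ uIcc a b, 0 ≤ β y) (hgβ : IntegrableOn (fun y ↦ g y * β y) (uIcc a b) μ)
    (ha : 0 ≤ g a) (hb : g b ≤ 0) (htotal : ∫ y in uIcc a b, g y * β y ∂μ ≤ 0)
    (hk : k ∈ uIcc a b) : ∫ y in uIcc k b, g y * β y ∂μ ≤ 0 := by
  have hneg : QuasilinearOn ℝ (uIcc a b) fun y ↦ -g y :=
    hg.antitone_comp (g := Neg.neg) fun _ _ ↦ neg_le_neg
  have hnegint : IntegrableOn (fun y ↦ -g y * β y) (uIcc a b) μ := by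
    simpa only [neg_mul, IntegrableOn] using Integrable.fun_neg hgβ
  have hnegtotal : 0 ≤ ∫ y in uIcc a b, -g y * β y ∂μ := by
    simpa only [neg_mul, integral_neg, neg_nonneg] using htotal
  rw [uIcc_comm a b] at hneg hβ hnegint hnegtotal hk
  have hright := setIntegral_uIcc_left_mul_nonneg hneg hβ hnegint
    (neg_nonneg.2 hb) (neg_nonpos.2 ha) hnegtotal hk
  simpa only [neg_mul, integral_neg, neg_nonneg, uIcc_comm b k] using hright

end UIcc

theorem mul_setIntegral_add_mul_setIntegral_mul {μ : Measure ℝ} {β : ℝ → ℝ} {s : Set ℝ}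
    (hβ : IntegrableOn β s μ) (hyβ : IntegrableOn (fun y ↦ y * β y) s μ) (ν₁ ν₂ : ℝ) :
    ν₁ * (∫ y in s, β y ∂μ) + ν₂ * (∫ y in s, y * β y ∂μ)
      = ∫ y in s, (ν₁ + ν₂ * y) * β y ∂μ := by
  rw [← integral_const_mul, ← integral_const_mul,
    ← integral_add (hβ.const_mul ν₁) (hyβ.const_mul ν₂)]
  simp only [add_mul, mul_assoc]

theorem stmt11_general {μ : Measure ℝ} (um up : ℝ)
    (β : ℝ → ℝ) (hβint : IntegrableOn β (uIcc um up) μ)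
    (hβnonneg : ∀ y ∈ uIcc um up, 0 ≤ β y) (hβum : 0 < β um) (hβup : 0 < β up)
    (ν₁ ν₂ : ℝ)
    (hRH : ν₁ * (∫ y in uIcc um up, β y ∂μ) + ν₂ * (∫ y in uIcc um up, y * β y ∂μ) = 0)
    (hplus : ν₁ * β up + ν₂ * (up * β up) ≤ 0)
    (hminus : 0 ≤ ν₁ * β um + ν₂ * (um * β um)) :
    ∀ k ∈ uIcc um up,
      ν₁ * (∫ y in uIcc k up, β y ∂μ) + ν₂ * (∫ y in uIcc k up, y * β y ∂μ) ≤ 0 ∧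
        0 ≤ ν₁ * (∫ y in uIcc um k, β y ∂μ) + ν₂ * (∫ y in uIcc um k, y * β y ∂μ) := by
  intro k hk
  have hyβint : IntegrableOn (fun y ↦ y * β y) (uIcc um up) μ :=
    hβint.continuousOn_mul continuousOn_id isCompact_uIcc
  have hint : IntegrableOn (fun y ↦ (ν₁ + ν₂ * y) * β y) (uIcc um up) μ :=
    hβint.continuousOn_mul (by fun_prop) isCompact_uIcc
  have hpair {s : Set ℝ} (hs : s ⊆ uIcc um up) := mul_setIntegral_add_mul_setIntegral_mul
    (hβint.mono_set hs) (hyβint.mono_set hs) ν₁ ν₂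
  have hlin := quasilinearOn_const_add_const_mul (convex_uIcc um up) ν₁ ν₂
  rw [← mul_assoc, ← add_mul] at hplus hminus
  have hup : ν₁ + ν₂ * up ≤ 0 := nonpos_of_mul_nonpos_left hplus hβup
  have hum : 0 ≤ ν₁ + ν₂ * um := nonneg_of_mul_nonneg_left hminus hβum
  rw [hpair subset_rfl] at hRH
  rw [hpair (uIcc_subset_uIcc_left hk), hpair (uIcc_subset_uIcc_right hk)]
  exact ⟨setIntegral_uIcc_right_mul_nonpos hlin hβnonneg hint hum hup hRH.le hk,
    setIntegral_uIcc_left_mul_nonneg hlin hβnonneg hint hum hup hRH.ge hk⟩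

theorem stmt11 (um up : ℝ) (hne : um ≠ up)
    (β : ℝ → ℝ) (hβc : ContinuousOn β (Set.uIcc um up))
    (hβpos : ∀ y ∈ Set.uIcc um up, 0 < β y)
    (ν₁ ν₂ : ℝ)
    (hRH : ν₁ * (∫ y in Set.uIcc um up, β y) + ν₂ * (∫ y in Set.uIcc um up, y * β y) = 0)
    (hplus : ν₁ * β up + ν₂ * (up * β up) ≤ 0)
    (hminus : 0 ≤ ν₁ * β um + ν₂ * (um * β um)) :
    ∀ k ∈ Set.uIcc um up,
      ν₁ * (∫ y in Set.uIcc k up, β y) + ν₂ * (∫ y in Set.uIcc k up, y * β y)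
        ≤ ν₁ * (∫ y in Set.uIcc um k, β y) + ν₂ * (∫ y in Set.uIcc um k, y * β y) := by
  have hβint := hβc.integrableOn_compact (μ := volume) isCompact_uIcc
  exact fun k hk ↦ (stmt11_general um up β hβint (fun y hy ↦ (hβpos y hy).le)
    (hβpos um left_mem_uIcc) (hβpos up right_mem_uIcc) ν₁ ν₂ hRH hplus hminus k hk).elim le_trans
end

section
/- Let J ⊆ ℝ be an open interval and β : J → ℝ continuous. The following are equivalent: (a) for all s, t ∈ J with s < t, ∫ₛᵗ β(x) dx ≠ 0; (b) β(x)·β(y) ≥ 0 for all x, y ∈ J, and every nonempty open subinterval I ⊆ J contains a point x with β(x) ≠ 0. -/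
/-!
If no integral of `β` over a nondegenerate subinterval of `[x, y]` vanishes, then the primitive
`u ↦ ∫ v in x..u, β v` is continuous and injective on `[x, y]`, hence strictly monotone. So all
these integrals have the same sign, and shrinking the interval towards a point gives `β` that sign
there. Conversely, a continuous function of constant sign which is nonzero somewhere in an interval
has nonzero integral over it.
-/

open MeasureTheory Set Topology

section

variable {μ : Measure ℝ} {f : ℝ → ℝ} {J : Set ℝ} {a b : ℝ}

theorem exists_mem_Ioc_ne_zero_of_intervalIntegral_ne_zero (hab : a ≤ b)
    (h : ∫ x in a..b, f x ∂μ ≠ 0) : ∃ x ∈ Ioc a b, f x ≠ 0 := by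
  contrapose! h
  exact intervalIntegral.integral_zero_ae
    (Filter.Eventually.of_forall fun x hx ↦ h x (uIoc_of_le hab ▸ hx))

theorem intervalIntegral_forall_pos_or_forall_neg [NullSingletonClass μ] (hab : a ≤ b)
    (hf : IntervalIntegrable f μ a b)
    (h : ∀ s ∈ Icc a b, ∀ t ∈ Icc a b, s < t → ∫ x in s..t, f x ∂μ ≠ 0) :
    (∀ s ∈ Icc a b, ∀ t ∈ Icc a b, s < t → 0 < ∫ x in s..t, f x ∂μ) ∨
      (∀ s ∈ Icc a b, ∀ t ∈ Icc a b, s < t → ∫ x in s..t, f x ∂μ < 0) := by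
  set F : ℝ → ℝ := fun u ↦ ∫ x in a..u, f x ∂μ
  have integrable_from_left : ∀ u ∈ Icc a b, IntervalIntegrable f μ a u := fun u hu ↦
    hf.mono_set (uIcc_subset_uIcc_left (Icc_subset_uIcc hu))
  have F_sub : ∀ s ∈ Icc a b, ∀ t ∈ Icc a b, F t - F s = ∫ x in s..t, f x ∂μ := fun s hs t ht ↦
    intervalIntegral.integral_interval_sub_left (integrable_from_left t ht)
      (integrable_from_left s hs)
  have F_continuousOn : ContinuousOn F (Icc a b) := by
    simpa only [uIcc_of_le hab] using
      intervalIntegral.continuousOn_primitive_interval' hf left_mem_uIcc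
  have F_ne : ∀ s ∈ Icc a b, ∀ t ∈ Icc a b, s < t → F s ≠ F t := fun s hs t ht hst heq ↦
    h s hs t ht hst (by rw [← F_sub s hs t ht, heq, sub_self])
  have F_injOn : InjOn F (Icc a b) := by
    intro s hs t ht heq
    by_contra hne
    rcases lt_or_gt_of_ne hne with hst | hts
    · exact F_ne s hs t ht hst heq
    · exact F_ne t ht s hs hts heq.symm
  refine (F_continuousOn.strictMonoOn_of_injOn_Icc' hab F_injOn).imp ?_ ?_ <;>
    intro hF s hs t ht hst <;> rw [← F_sub s hs t ht]
  · exact sub_pos.2 (hF hs ht hst)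
  · exact sub_neg.2 (hF hs ht hst)

variable [IsLocallyFiniteMeasure μ] [μ.IsOpenPosMeasure]

theorem intervalIntegral_pos_of_continuousOn (hab : a < b) (hf : ContinuousOn f (Icc a b))
    (hnonneg : ∀ x ∈ Icc a b, 0 ≤ f x) (hpos : ∃ c ∈ Icc a b, 0 < f c) :
    0 < ∫ x in a..b, f x ∂μ := by
  refine (intervalIntegral.integral_nonneg hab.le hnonneg).lt_of_ne' fun hzero ↦ ?_
  have ae_nonneg : 0 ≤ᵐ[μ.restrict (Ioc a b)] f :=
    ae_restrict_of_forall_mem measurableSet_Ioc fun x hx ↦ hnonneg x (Ioc_subset_Icc_self hx)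
  have ae_eq_zero : f =ᵐ[μ.restrict (Ioc a b)] 0 :=
    (intervalIntegral.integral_eq_zero_iff_of_le_of_nonneg_ae hab.le ae_nonneg
      (hf.intervalIntegrable_of_Icc hab.le)).1 hzero
  have eqOn_Ioo : EqOn f 0 (Ioo a b) :=
    Measure.eqOn_open_of_ae_eq (ae_restrict_of_ae_restrict_of_subset Ioo_subset_Ioc_self ae_eq_zero)
      isOpen_Ioo (hf.mono Ioo_subset_Icc_self) continuousOn_const
  have eqOn_Icc : EqOn f 0 (Icc a b) :=
    eqOn_Ioo.of_subset_closure hf continuousOn_const Ioo_subset_Icc_self (closure_Ioo hab.ne).ge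
  obtain ⟨c, hc, hfc⟩ := hpos
  exact hfc.ne' (eqOn_Icc hc)

theorem intervalIntegral_ne_zero_of_mul_nonneg (hab : a < b) (hf : ContinuousOn f (Icc a b))
    (hmul : ∀ x ∈ Icc a b, ∀ y ∈ Icc a b, 0 ≤ f x * f y) (hne : ∃ c ∈ Icc a b, f c ≠ 0) :
    ∫ x in a..b, f x ∂μ ≠ 0 := by
  obtain ⟨c, hc, hfc⟩ := hne
  rcases lt_or_gt_of_ne hfc with hneg | hpos
  · have : 0 < ∫ x in a..b, -f x ∂μ :=
      intervalIntegral_pos_of_continuousOn hab hf.neg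
        (fun x hx ↦ neg_nonneg.2 (nonpos_of_mul_nonneg_right (hmul c hc x hx) hneg))
        ⟨c, hc, neg_pos.2 hneg⟩
    rw [intervalIntegral.integral_neg] at this
    exact (neg_pos.1 this).ne
  · exact (intervalIntegral_pos_of_continuousOn hab hf
      (fun x hx ↦ (mul_nonneg_iff_of_pos_left hpos).1 (hmul c hc x hx)) ⟨c, hc, hpos⟩).ne'

theorem nonneg_of_intervalIntegral_nonneg (hab : a < b) (hf : ContinuousOn f (Icc a b))
    (h : ∀ s ∈ Icc a b, ∀ t ∈ Icc a b, s < t → 0 ≤ ∫ x in s..t, f x ∂μ) :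
    ∀ x ∈ Icc a b, 0 ≤ f x := by
  have nonneg_Ico : MapsTo f (Ico a b) (Ici 0) := by
    intro z hz
    by_contra hfz
    have eventually_neg : ∀ᶠ x in 𝓝[≥] z, x ∈ Icc a b ∧ f x < 0 := by
      have hmem : Icc a b ∈ 𝓝[≥] z := Icc_mem_nhdsGE_of_mem hz
      have hcont : ContinuousWithinAt f (Ici z) z :=
        (hf z (Ico_subset_Icc_self hz)).mono_of_mem_nhdsWithin hmem
      exact Filter.Eventually.and hmem (hcont.eventually_lt_const (not_le.1 hfz))
    obtain ⟨t, hzt, hsub⟩ := mem_nhdsGE_iff_exists_Icc_subset.1 eventually_neg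
    have integral_neg_pos : 0 < ∫ x in z..t, -f x ∂μ :=
      intervalIntegral_pos_of_continuousOn hzt (hf.neg.mono fun x hx ↦ (hsub hx).1)
        (fun x hx ↦ neg_nonneg.2 (hsub hx).2.le)
        ⟨z, left_mem_Icc.2 hzt.le, neg_pos.2 (not_le.1 hfz)⟩
    rw [intervalIntegral.integral_neg] at integral_neg_pos
    exact (neg_pos.1 integral_neg_pos).not_ge
      (h z (Ico_subset_Icc_self hz) t (hsub (right_mem_Icc.2 hzt.le)).1 hzt)
  have nonneg_closure : MapsTo f (closure (Ico a b)) (closure (Ici 0)) :=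
    nonneg_Ico.closure_of_continuousOn (by rwa [closure_Ico hab.ne])
  rwa [closure_Ico hab.ne, closure_Ici] at nonneg_closure

theorem nonpos_of_intervalIntegral_nonpos (hab : a < b) (hf : ContinuousOn f (Icc a b))
    (h : ∀ s ∈ Icc a b, ∀ t ∈ Icc a b, s < t → ∫ x in s..t, f x ∂μ ≤ 0) :
    ∀ x ∈ Icc a b, f x ≤ 0 := fun x hx ↦
  neg_nonneg.1 <| nonneg_of_intervalIntegral_nonneg (μ := μ) hab hf.neg
    (fun s hs t ht hst ↦ by
      simpa only [Pi.neg_apply, intervalIntegral.integral_neg, neg_nonneg] using h s hs t ht hst)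
    x hx

variable [NullSingletonClass μ]

theorem mul_nonneg_of_intervalIntegral_ne_zero (hJ : J.OrdConnected) (hf : ContinuousOn f J)
    (h : ∀ s ∈ J, ∀ t ∈ J, s < t → ∫ x in s..t, f x ∂μ ≠ 0) :
    ∀ x ∈ J, ∀ y ∈ J, 0 ≤ f x * f y := by
  intro x hx y hy
  wlog hxy : x < y generalizing x y
  · rcases (not_lt.1 hxy).eq_or_lt with rfl | hyx
    · exact mul_self_nonneg _
    · rw [mul_comm]
      exact this y hy x hx hyx
  have hsub : Icc x y ⊆ J := hJ.out hx hy
  have hcont : ContinuousOn f (Icc x y) := hf.mono hsub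
  have hx' : x ∈ Icc x y := left_mem_Icc.2 hxy.le
  have hy' : y ∈ Icc x y := right_mem_Icc.2 hxy.le
  rcases intervalIntegral_forall_pos_or_forall_neg hxy.le
    (hcont.intervalIntegrable_of_Icc hxy.le)
    (fun s hs t ht ↦ h s (hsub hs) t (hsub ht)) with hpos | hneg
  · have hnonneg := nonneg_of_intervalIntegral_nonneg hxy hcont
      fun s hs t ht hst ↦ (hpos s hs t ht hst).le
    exact mul_nonneg (hnonneg x hx') (hnonneg y hy')
  · have hnonpos := nonpos_of_intervalIntegral_nonpos hxy hcont
      fun s hs t ht hst ↦ (hneg s hs t ht hst).le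
    exact mul_nonneg_of_nonpos_of_nonpos (hnonpos x hx') (hnonpos y hy')

theorem stmt12_general (hJ : J.OrdConnected) (hf : ContinuousOn f J) :
    (∀ s ∈ J, ∀ t ∈ J, s < t → ∫ x in s..t, f x ∂μ ≠ 0) ↔
      (∀ x ∈ J, ∀ y ∈ J, 0 ≤ f x * f y) ∧
        ∀ a b : ℝ, a < b → Ioo a b ⊆ J → ∃ x ∈ Ioo a b, f x ≠ 0 := by
  refine ⟨fun h ↦ ⟨mul_nonneg_of_intervalIntegral_ne_zero hJ hf h, fun a b hab hsub ↦ ?_⟩, ?_⟩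
  · obtain ⟨s, has, hsb⟩ := exists_between hab
    obtain ⟨t, hst, htb⟩ := exists_between hsb
    obtain ⟨x, hx, hfx⟩ := exists_mem_Ioc_ne_zero_of_intervalIntegral_ne_zero hst.le
      (h s (hsub ⟨has, hsb⟩) t (hsub ⟨has.trans hst, htb⟩) hst)
    exact ⟨x, ⟨has.trans hx.1, hx.2.trans_lt htb⟩, hfx⟩
  · rintro ⟨hmul, hne⟩ s hs t ht hst
    have hsub : Icc s t ⊆ J := hJ.out hs ht
    obtain ⟨c, hc, hfc⟩ := hne s t hst (Ioo_subset_Icc_self.trans hsub)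
    exact intervalIntegral_ne_zero_of_mul_nonneg hst (hf.mono hsub)
      (fun x hx y hy ↦ hmul x (hsub hx) y (hsub hy)) ⟨c, Ioo_subset_Icc_self hc, hfc⟩

end

theorem stmt12 (J : Set ℝ) (hJo : IsOpen J) (hJc : J.OrdConnected)
    (β : ℝ → ℝ) (hβ : ContinuousOn β J) :
    (∀ s ∈ J, ∀ t ∈ J, s < t → (∫ x in s..t, β x) ≠ 0) ↔
      ((∀ x ∈ J, ∀ y ∈ J, 0 ≤ β x * β y) ∧
        ∀ a b : ℝ, a < b → Set.Ioo a b ⊆ J → ∃ x ∈ Set.Ioo a b, β x ≠ 0) :=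
  stmt12_general hJc hβ
end

section
/- Let J ⊆ ℝ be an open interval and β : J → ℝ continuous. The following are equivalent: (a) for all s, t ∈ J with s < t, ∫ₛᵗ β(x) dx ≠ 0; (b) for all s, t ∈ J with s < t, ∫ₛᵗ β(x) dx ≠ 0 and the barycenter B(s,t) := (∫ₛᵗ x·β(x) dx)/(∫ₛᵗ β(x) dx) satisfies s < B(s,t) < t. -/
/-!
The increments of the primitive `x ↦ ∫ y in s..x, β y` are the masses of the subintervals of
`[s, t]`. If none of them vanishes, the primitive is continuous and injective, hence strictly
monotone, so all these masses have the same sign, say positive. By the Lebesgue differentiation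
theorem `β ≥ 0` almost everywhere on `[s, t]`, so both `∫ (x - s) β` and `∫ (t - x) β` are positive,
which is the claim about the barycenter.
-/

open MeasureTheory Set Metric

section Nonneg

theorem integral_mul_pos_of_ae_pos {α : Type*} [MeasurableSpace α] {μ : Measure α} {w f : α → ℝ}
    (hw : ∀ᵐ x ∂μ, 0 < w x) (hf : 0 ≤ᵐ[μ] f) (hf_ne : ∫ x, f x ∂μ ≠ 0)
    (hwf : Integrable (fun x => w x * f x) μ) : 0 < ∫ x, w x * f x ∂μ := by
  have hwf_nonneg : 0 ≤ᵐ[μ] fun x => w x * f x := by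
    filter_upwards [hw, hf] with x hwx hfx using mul_nonneg hwx.le hfx
  refine (integral_nonneg_of_ae hwf_nonneg).lt_of_ne' fun h_zero => hf_ne ?_
  refine integral_eq_zero_of_ae ?_
  filter_upwards [hw, (integral_eq_zero_iff_of_nonneg_ae hwf_nonneg hwf).1 h_zero]
    with x hwx hwfx using (mul_eq_zero.1 hwfx).resolve_left hwx.ne'

theorem ae_nonneg_of_forall_setIntegral_closedBall_nonneg {α : Type*} [MetricSpace α]
    [SecondCountableTopology α] [HasBesicovitchCovering α] [MeasurableSpace α] [BorelSpace α]
    {μ : Measure α} [IsLocallyFiniteMeasure μ] {f : α → ℝ} (hf : LocallyIntegrable f μ)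
    (h : ∀ x r, 0 ≤ ∫ y in closedBall x r, f y ∂μ) : 0 ≤ᵐ[μ] f := by
  filter_upwards [(Besicovitch.vitaliFamily μ).ae_tendsto_average hf] with x hx
  refine ge_of_tendsto' (hx.comp (Besicovitch.tendsto_filterAt μ x)) fun r => ?_
  rw [Function.comp_apply, setAverage_eq]
  exact smul_nonneg (by positivity) (h x r)

variable {μ : Measure ℝ} [NullSingletonClass μ] {f : ℝ → ℝ} {a b : ℝ}

theorem ae_nonneg_of_forall_intervalIntegral_nonneg [IsLocallyFiniteMeasure μ]
    (hf : IntervalIntegrable f μ a b)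
    (h : ∀ s ∈ Icc a b, ∀ t ∈ Icc a b, s < t → 0 ≤ ∫ x in s..t, f x ∂μ) :
    0 ≤ᵐ[μ.restrict (Ioc a b)] f := by
  refine ae_nonneg_of_forall_setIntegral_closedBall_nonneg hf.1.locallyIntegrable fun x r => ?_
  have h_inter : (closedBall x r ∩ Ioc a b : Set ℝ) =ᵐ[μ] Ioc (max (x - r) a) (min (x + r) b) := by
    rw [Real.closedBall_eq_Icc, ← Ioc_inter_Ioc]
    exact Ioc_ae_eq_Icc.symm.inter (ae_eq_refl _)
  rw [Measure.restrict_restrict measurableSet_closedBall, setIntegral_congr_set h_inter]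
  rcases lt_or_ge (max (x - r) a) (min (x + r) b) with hlt | hge
  · rw [← intervalIntegral.integral_of_le hlt.le]
    exact h _ ⟨le_max_right _ _, hlt.le.trans (min_le_right _ _)⟩
      _ ⟨(le_max_right _ _).trans hlt.le, min_le_right _ _⟩ hlt
  · simp [Ioc_eq_empty hge.not_gt]

theorem forall_intervalIntegral_pos_or_forall_neg (hab : a ≤ b) (hf : IntervalIntegrable f μ a b)
    (h : ∀ s ∈ Icc a b, ∀ t ∈ Icc a b, s < t → ∫ x in s..t, f x ∂μ ≠ 0) :
    (∀ s ∈ Icc a b, ∀ t ∈ Icc a b, s < t → 0 < ∫ x in s..t, f x ∂μ) ∨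
      (∀ s ∈ Icc a b, ∀ t ∈ Icc a b, s < t → ∫ x in s..t, f x ∂μ < 0) := by
  set F : ℝ → ℝ := fun x => ∫ y in a..x, f y ∂μ
  have hF_cont : ContinuousOn F (Icc a b) := by
    simpa only [uIcc_of_le hab] using
      intervalIntegral.continuousOn_primitive_interval' hf left_mem_uIcc
  have hf_left : ∀ x ∈ Icc a b, IntervalIntegrable f μ a x := fun x hx =>
    hf.mono_set (uIcc_subset_uIcc left_mem_uIcc (Icc_subset_uIcc hx))
  have h_sub : ∀ s ∈ Icc a b, ∀ t ∈ Icc a b, ∫ x in s..t, f x ∂μ = F t - F s := fun s hs t ht =>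
    (intervalIntegral.integral_interval_sub_left (hf_left t ht) (hf_left s hs)).symm
  have hF_inj : InjOn F (Icc a b) := by
    refine injOn_iff_pairwise_ne.2 fun s hs t ht hst => ?_
    rcases hst.lt_or_gt with hlt | hgt
    · exact (sub_ne_zero.1 (h_sub s hs t ht ▸ h s hs t ht hlt)).symm
    · exact sub_ne_zero.1 (h_sub t ht s hs ▸ h t ht s hs hgt)
  refine (hF_cont.strictMonoOn_of_injOn_Icc' hab hF_inj).imp
    (fun hmono s hs t ht hst => ?_) (fun hanti s hs t ht hst => ?_) <;> rw [h_sub s hs t ht]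
  · exact sub_pos.2 (hmono hs ht hst)
  · exact sub_neg.2 (hanti hs ht hst)

end Nonneg

/-- The barycenter `B(s, t)` of the interval `(s, t]` for the signed measure with density `β` with
respect to `μ`; it is the junk value `0` if that interval has zero mass. -/
noncomputable def barycenter (β : ℝ → ℝ) (μ : Measure ℝ) (s t : ℝ) : ℝ :=
  (∫ x in s..t, x * β x ∂μ) / ∫ x in s..t, β x ∂μ

section Barycenter

variable {μ : Measure ℝ} {β : ℝ → ℝ} {s t : ℝ}

theorem barycenter_neg (β : ℝ → ℝ) (μ : Measure ℝ) (s t : ℝ) :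
    barycenter (-β) μ s t = barycenter β μ s t := by
  simp [barycenter, neg_div_neg_eq]

variable [NullSingletonClass μ]

theorem barycenter_mem_Ioo_of_ae_nonneg (hst : s ≤ t) (hβ : IntervalIntegrable β μ s t)
    (hβ_nonneg : 0 ≤ᵐ[μ.restrict (Ioc s t)] β) (hβ_ne : ∫ x in s..t, β x ∂μ ≠ 0) :
    barycenter β μ s t ∈ Ioo s t := by
  have hxβ : IntervalIntegrable (fun x => x * β x) μ s t := hβ.continuousOn_mul continuousOn_id
  have h_mem : ∀ᵐ x ∂μ.restrict (Ioc s t), x ∈ Ioo s t :=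
    restrict_Ioo_eq_restrict_Ioc (μ := μ) ▸ ae_restrict_mem measurableSet_Ioo
  have h_moment_pos : ∀ w : ℝ → ℝ, Continuous w → (∀ x ∈ Ioo s t, 0 < w x) →
      0 < ∫ x in s..t, w x * β x ∂μ := fun w hw hw_pos => by
    rw [intervalIntegral.integral_of_le hst] at hβ_ne ⊢
    exact integral_mul_pos_of_ae_pos (h_mem.mono hw_pos) hβ_nonneg hβ_ne
      (hβ.continuousOn_mul hw.continuousOn).1
  have h_mass : 0 < ∫ x in s..t, β x ∂μ := by
    simpa using h_moment_pos (fun _ => 1) continuous_const fun _ _ => one_pos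
  have h_left : 0 < (∫ x in s..t, x * β x ∂μ) - s * ∫ x in s..t, β x ∂μ := by
    rw [← intervalIntegral.integral_const_mul, ← intervalIntegral.integral_sub hxβ (hβ.const_mul s)]
    simpa only [sub_mul] using h_moment_pos (· - s) (by fun_prop) fun x hx => sub_pos.2 hx.1
  have h_right : 0 < t * (∫ x in s..t, β x ∂μ) - ∫ x in s..t, x * β x ∂μ := by
    rw [← intervalIntegral.integral_const_mul, ← intervalIntegral.integral_sub (hβ.const_mul t) hxβ]
    simpa only [sub_mul] using h_moment_pos (t - ·) (by fun_prop) fun x hx => sub_pos.2 hx.2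
  exact ⟨(lt_div_iff₀ h_mass).2 (sub_pos.1 h_left), (div_lt_iff₀ h_mass).2 (sub_pos.1 h_right)⟩

variable [IsLocallyFiniteMeasure μ]

theorem barycenter_mem_Ioo_of_forall_integral_pos (hst : s < t) (hβ : IntervalIntegrable β μ s t)
    (h : ∀ a ∈ Icc s t, ∀ b ∈ Icc s t, a < b → 0 < ∫ x in a..b, β x ∂μ) :
    barycenter β μ s t ∈ Ioo s t :=
  barycenter_mem_Ioo_of_ae_nonneg hst.le hβ
    (ae_nonneg_of_forall_intervalIntegral_nonneg hβ fun a ha b hb hab => (h a ha b hb hab).le)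
    (h s (left_mem_Icc.2 hst.le) t (right_mem_Icc.2 hst.le) hst).ne'

theorem barycenter_mem_Ioo_of_forall_integral_ne_zero (hst : s < t)
    (hβ : IntervalIntegrable β μ s t)
    (h : ∀ a ∈ Icc s t, ∀ b ∈ Icc s t, a < b → ∫ x in a..b, β x ∂μ ≠ 0) :
    barycenter β μ s t ∈ Ioo s t := by
  rcases forall_intervalIntegral_pos_or_forall_neg hst.le hβ h with h_pos | h_neg
  · exact barycenter_mem_Ioo_of_forall_integral_pos hst hβ h_pos
  · rw [← barycenter_neg]
    refine barycenter_mem_Ioo_of_forall_integral_pos hst hβ.neg fun a ha b hb hab => ?_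
    simpa using h_neg a ha b hb hab

end Barycenter

theorem stmt13_general {J : Set ℝ} (hJ : J.OrdConnected) {μ : Measure ℝ} [IsLocallyFiniteMeasure μ]
    [NullSingletonClass μ] {β : ℝ → ℝ} (hβ : LocallyIntegrableOn β J μ) :
    (∀ s ∈ J, ∀ t ∈ J, s < t → (∫ x in s..t, β x ∂μ) ≠ 0) ↔
      (∀ s ∈ J, ∀ t ∈ J, s < t → (∫ x in s..t, β x ∂μ) ≠ 0 ∧ barycenter β μ s t ∈ Ioo s t) := by
  refine ⟨fun h s hs t ht hst => ⟨h s hs t ht hst, ?_⟩, fun h s hs t ht hst => (h s hs t ht hst).1⟩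
  have h_sub : Icc s t ⊆ J := hJ.out hs ht
  have hβ_st : IntervalIntegrable β μ s t :=
    (intervalIntegrable_iff_integrableOn_Icc_of_le hst.le).2
      (hβ.integrableOn_compact_subset h_sub isCompact_Icc)
  exact barycenter_mem_Ioo_of_forall_integral_ne_zero hst hβ_st
    fun a ha b hb hab => h a (h_sub ha) b (h_sub hb) hab

theorem stmt13 (J : Set ℝ) (hJo : IsOpen J) (hJc : J.OrdConnected)
    (β : ℝ → ℝ) (hβ : ContinuousOn β J) :
    (∀ s ∈ J, ∀ t ∈ J, s < t → (∫ x in s..t, β x) ≠ 0) ↔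
      (∀ s ∈ J, ∀ t ∈ J, s < t → (∫ x in s..t, β x) ≠ 0 ∧
        s < (∫ x in s..t, x * β x) / (∫ x in s..t, β x) ∧
        (∫ x in s..t, x * β x) / (∫ x in s..t, β x) < t) :=
  stmt13_general hJc (hβ.locallyIntegrableOn hJc.measurableSet)
end

section
/- Let J ⊆ ℝ be an open interval and β : J → ℝ continuous, and suppose that for all s, t ∈ J with s ≠ t the vector v(s,t) := (∫ₛᵗ β(x) dx, ∫ₛᵗ x·β(x) dx) ∈ ℝ² is nonzero. Then the following are equivalent: (a) for all s, t ∈ J with s < t, ∫ₛᵗ β(x) dx ≠ 0; (b) for every s ∈ J, the map t ↦ [v(s,t)] from J \ {s} to the real projective line P(ℝ²) (sending t to the line ℝ·v(s,t)) is injective. -/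
/-!
Write `v(a, b) = (F b - F a, G b - G a)` with primitives `F` of `β` and `G` of `x β`. Three distinct
points of `J` violate (b), with one of them as base point, exactly when `det (v(a, b), v(b, c)) = 0`
for their increasing arrangement `a < b < c`. Integrating `G` by parts turns this determinant into

  `D(a, b, c) = (F b - F a) ∫_b^c (F c - F x) dx + (F c - F b) ∫_a^b (F x - F a) dx`,

so the question is when a continuous `F` admits `a < b < c` with `D(a, b, c) = 0`. If `F` is
injective, it is strictly monotone and `D > 0`. If `F s = F t` with `s < t`, then `D(s, ·, t)`
integrates over `[s, t]` to `-(∫_s^t (F x - F s) dx)²`, so `D ≤ 0` somewhere; unless `F` is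
constant on `[s, t]`, `F` or `-F`, which have the same `D`, has a minimum followed by a larger
maximum, and `D > 0` in between; since the increasing triples in `[s, t]` form a convex set, `D`
vanishes somewhere.
-/

open MeasureTheory Set Submodule

section ChordDet

/-- The determinant of the successive chords from `a` to `b` and from `b` to `c` of the plane curve
`t ↦ (F t, ∫ x dF(x))`, integrated by parts so that it makes sense for any continuous `F`. -/
noncomputable def chordDet (F : ℝ → ℝ) (a b c : ℝ) : ℝ :=
  (F b - F a) * (∫ x in b..c, (F c - F x)) + (F c - F b) * ∫ x in a..b, (F x - F a)

variable {F : ℝ → ℝ} {a b c s t : ℝ}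

lemma chordDet_neg (F : ℝ → ℝ) (a b c : ℝ) : chordDet (-F) a b c = chordDet F a b c := by
  have hleft : ∫ x in a..b, ((-F) x - (-F) a) = -∫ x in a..b, (F x - F a) := by
    rw [← intervalIntegral.integral_neg]
    exact intervalIntegral.integral_congr fun x _ => by simp only [Pi.neg_apply]; ring
  have hright : ∫ x in b..c, ((-F) c - (-F) x) = -∫ x in b..c, (F c - F x) := by
    rw [← intervalIntegral.integral_neg]
    exact intervalIntegral.integral_congr fun x _ => by simp only [Pi.neg_apply]; ring
  rw [chordDet, chordDet, hleft, hright]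
  simp only [Pi.neg_apply]
  ring

lemma chordDet_eq_of_intervalIntegrable (hab : IntervalIntegrable F volume a b)
    (hbc : IntervalIntegrable F volume b c) :
    chordDet F a b c = (F b - F a) * ((c - b) * F c - ∫ x in b..c, F x) +
      (F c - F b) * ((∫ x in a..b, F x) - (b - a) * F a) := by
  rw [chordDet, intervalIntegral.integral_sub intervalIntegrable_const hbc,
    intervalIntegral.integral_sub hab intervalIntegrable_const]
  simp only [intervalIntegral.integral_const, smul_eq_mul]

lemma chordDet_pos (hF : ContinuousOn F (Icc a c)) (hbound : MapsTo F (Icc a c) (Icc (F a) (F c)))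
    (hb : b ∈ Icc a c) (hFb : F b ∈ Ioo (F a) (F c)) : 0 < chordDet F a b c := by
  have hab : a < b := hb.1.lt_of_ne fun h => hFb.1.ne (congrArg F h)
  have hbc : b < c := hb.2.lt_of_ne fun h => hFb.2.ne (congrArg F h)
  have hleft : 0 < ∫ x in a..b, (F x - F a) :=
    intervalIntegral.integral_pos hab
      ((hF.mono (Icc_subset_Icc_right hb.2)).sub continuousOn_const)
      (fun x hx => sub_nonneg.2 (hbound ⟨hx.1.le, hx.2.trans hb.2⟩).1)
      ⟨b, right_mem_Icc.2 hb.1, sub_pos.2 hFb.1⟩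
  have hright : 0 < ∫ x in b..c, (F c - F x) :=
    intervalIntegral.integral_pos hbc
      (continuousOn_const.sub (hF.mono (Icc_subset_Icc_left hb.1)))
      (fun x hx => sub_nonneg.2 (hbound ⟨hb.1.trans hx.1.le, hx.2⟩).2)
      ⟨b, left_mem_Icc.2 hb.2, sub_pos.2 hFb.2⟩
  exact add_pos (mul_pos (sub_pos.2 hFb.1) hright) (mul_pos (sub_pos.2 hFb.2) hleft)

lemma chordDet_pos_of_strictMonoOn (hF : ContinuousOn F (Icc a c))
    (hmono : StrictMonoOn F (Icc a c)) (hb : b ∈ Ioo a c) : 0 < chordDet F a b c := by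
  have hac : a ≤ c := (hb.1.trans hb.2).le
  have ha : a ∈ Icc a c := left_mem_Icc.2 hac
  have hc : c ∈ Icc a c := right_mem_Icc.2 hac
  have hb' : b ∈ Icc a c := Ioo_subset_Icc_self hb
  exact chordDet_pos hF hmono.monotoneOn.mapsTo_Icc hb' ⟨hmono ha hb' hb.1, hmono hb' hc hb.2⟩

lemma chordDet_pos_of_injOn (hF : ContinuousOn F (Icc a c)) (hinj : InjOn F (Icc a c))
    (hb : b ∈ Ioo a c) : 0 < chordDet F a b c := by
  rcases hF.strictMonoOn_of_injOn_Icc' (hb.1.trans hb.2).le hinj with hmono | hanti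
  · exact chordDet_pos_of_strictMonoOn hF hmono hb
  · rw [← chordDet_neg]
    exact chordDet_pos_of_strictMonoOn hF.neg hanti.neg hb

/-- The increasing triples of points of `[s, t]`, the domain on which the sign of `chordDet` is
studied. -/
def increasingTriples (s t : ℝ) : Set (ℝ × ℝ × ℝ) :=
  {p | s ≤ p.1 ∧ p.1 < p.2.1 ∧ p.2.1 < p.2.2 ∧ p.2.2 ≤ t}

lemma mem_Icc_of_mem_increasingTriples {p : ℝ × ℝ × ℝ} (hp : p ∈ increasingTriples s t) :
    p.1 ∈ Icc s t ∧ p.2.1 ∈ Icc s t ∧ p.2.2 ∈ Icc s t := by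
  obtain ⟨hs, h₁₂, h₂₃, ht⟩ := hp
  exact ⟨⟨hs, (h₁₂.trans h₂₃).le.trans ht⟩, ⟨hs.trans h₁₂.le, h₂₃.le.trans ht⟩,
    ⟨hs.trans (h₁₂.trans h₂₃).le, ht⟩⟩

lemma convex_increasingTriples (s t : ℝ) : Convex ℝ (increasingTriples s t) := by
  refine convex_iff_forall_pos.2 ?_
  rintro p ⟨hsp, hp₁, hp₂, hpt⟩ q ⟨hsq, hq₁, hq₂, hqt⟩ u w hu hw huw
  refine ⟨?_, ?_, ?_, ?_⟩
  · calc s = u * s + w * s := by rw [← add_mul, huw, one_mul]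
      _ ≤ u * p.1 + w * q.1 := by gcongr
  · change u * p.1 + w * q.1 < u * p.2.1 + w * q.2.1
    gcongr
  · change u * p.2.1 + w * q.2.1 < u * p.2.2 + w * q.2.2
    gcongr
  · calc u * p.2.2 + w * q.2.2 ≤ u * t + w * t := by gcongr
      _ = t := by rw [← add_mul, huw, one_mul]

lemma continuousOn_chordDet (hst : s ≤ t) (hF : ContinuousOn F (Icc s t)) :
    ContinuousOn (fun p : ℝ × ℝ × ℝ => chordDet F p.1 p.2.1 p.2.2) (increasingTriples s t) := by
  have hint {a b : ℝ} (ha : a ∈ Icc s t) (hb : b ∈ Icc s t) : IntervalIntegrable F volume a b :=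
    (hF.mono (ordConnected_Icc.uIcc_subset ha hb)).intervalIntegrable
  have hfst : MapsTo (fun p : ℝ × ℝ × ℝ => p.1) (increasingTriples s t) (Icc s t) :=
    fun p hp => (mem_Icc_of_mem_increasingTriples hp).1
  have hmid : MapsTo (fun p : ℝ × ℝ × ℝ => p.2.1) (increasingTriples s t) (Icc s t) :=
    fun p hp => (mem_Icc_of_mem_increasingTriples hp).2.1
  have hlast : MapsTo (fun p : ℝ × ℝ × ℝ => p.2.2) (increasingTriples s t) (Icc s t) :=
    fun p hp => (mem_Icc_of_mem_increasingTriples hp).2.2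
  have hprim : ContinuousOn (fun x => ∫ y in s..x, F y) (Icc s t) := by
    rw [← uIcc_of_le hst] at hF ⊢
    exact intervalIntegral.continuousOn_primitive_interval hF.integrableOn_uIcc
  have hp₁ : ContinuousOn (fun p : ℝ × ℝ × ℝ => p.1) (increasingTriples s t) := by fun_prop
  have hp₂ : ContinuousOn (fun p : ℝ × ℝ × ℝ => p.2.1) (increasingTriples s t) := by fun_prop
  have hp₃ : ContinuousOn (fun p : ℝ × ℝ × ℝ => p.2.2) (increasingTriples s t) := by fun_prop
  have hF₁ := hF.comp hp₁ hfst
  have hF₂ := hF.comp hp₂ hmid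
  have hF₃ := hF.comp hp₃ hlast
  have hH₁ := hprim.comp hp₁ hfst
  have hH₂ := hprim.comp hp₂ hmid
  have hH₃ := hprim.comp hp₃ hlast
  have hexpanded : ContinuousOn (fun p : ℝ × ℝ × ℝ =>
      (F p.2.1 - F p.1) * ((p.2.2 - p.2.1) * F p.2.2 -
        ((∫ y in s..p.2.2, F y) - ∫ y in s..p.2.1, F y)) +
      (F p.2.2 - F p.2.1) * (((∫ y in s..p.2.1, F y) - ∫ y in s..p.1, F y) -
        (p.2.1 - p.1) * F p.1)) (increasingTriples s t) :=
    ((hF₂.sub hF₁).mul (((hp₃.sub hp₂).mul hF₃).sub (hH₃.sub hH₂))).add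
      ((hF₃.sub hF₂).mul ((hH₂.sub hH₁).sub ((hp₂.sub hp₁).mul hF₁)))
  refine hexpanded.congr fun p hp => ?_
  have hs : s ∈ Icc s t := left_mem_Icc.2 hst
  dsimp only
  rw [chordDet_eq_of_intervalIntegrable (hint (hfst hp) (hmid hp)) (hint (hmid hp) (hlast hp)),
    intervalIntegral.integral_interval_sub_left (hint hs (hlast hp)) (hint hs (hmid hp)),
    intervalIntegral.integral_interval_sub_left (hint hs (hmid hp)) (hint hs (hfst hp))]

lemma exists_chordDet_pos_of_lt {m : ℝ} (hF : ContinuousOn F (Icc s t)) (hm : m ∈ Icc s t)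
    (hlt : F s < F m) : ∃ p ∈ increasingTriples s t, 0 < chordDet F p.1 p.2.1 p.2.2 := by
  obtain ⟨c, hc, hmax⟩ := isCompact_Icc.exists_isMaxOn ⟨m, hm⟩ hF
  have hsc : Icc s c ⊆ Icc s t := Icc_subset_Icc_right hc.2
  obtain ⟨a, ha, hmin⟩ := isCompact_Icc.exists_isMinOn (nonempty_Icc.2 hc.1) (hF.mono hsc)
  have hac : Icc a c ⊆ Icc s c := Icc_subset_Icc_left ha.1
  have hFac : F a < F c := (hmin (left_mem_Icc.2 hc.1)).trans_lt (hlt.trans_le (hmax hm))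
  have hFcont : ContinuousOn F (Icc a c) := hF.mono (hac.trans hsc)
  obtain ⟨y, hy⟩ : (Ioo (F a) (F c)).Nonempty := nonempty_Ioo.2 hFac
  obtain ⟨b, hb, rfl⟩ := intermediate_value_Ioo ha.2 hFcont hy
  exact ⟨(a, b, c), ⟨ha.1, hb.1, hb.2, hc.2⟩,
    chordDet_pos hFcont (fun x hx => ⟨hmin (hac hx), hmax (hsc (hac hx))⟩)
      (Ioo_subset_Icc_self hb) hy⟩

lemma exists_chordDet_pos_of_ne {m : ℝ} (hF : ContinuousOn F (Icc s t)) (hm : m ∈ Icc s t)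
    (hne : F s ≠ F m) : ∃ p ∈ increasingTriples s t, 0 < chordDet F p.1 p.2.1 p.2.2 := by
  rcases hne.lt_or_gt with hlt | hgt
  · exact exists_chordDet_pos_of_lt hF hm hlt
  · simpa only [chordDet_neg] using exists_chordDet_pos_of_lt hF.neg hm (neg_lt_neg hgt)

lemma chordDet_of_apply_eq (hF : ContinuousOn F (Icc s t)) (hst : F s = F t) (hb : b ∈ Icc s t) :
    chordDet F s b t = -((F b - F s) * ∫ x in s..t, (F x - F s)) := by
  have hleft : IntervalIntegrable (fun x => F x - F s) volume s b :=
    ((hF.mono (Icc_subset_Icc_right hb.2)).sub continuousOn_const).intervalIntegrable_of_Icc hb.1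
  have hright : IntervalIntegrable (fun x => F x - F s) volume b t :=
    ((hF.mono (Icc_subset_Icc_left hb.1)).sub continuousOn_const).intervalIntegrable_of_Icc hb.2
  have hneg : ∫ x in b..t, (F s - F x) = -∫ x in b..t, (F x - F s) := by
    simp only [← intervalIntegral.integral_neg, neg_sub]
  rw [chordDet, ← hst, hneg, ← intervalIntegral.integral_add_adjacent_intervals hleft hright]
  ring

lemma exists_chordDet_nonpos (hlt : s < t) (hF : ContinuousOn F (Icc s t)) (hst : F s = F t) :
    ∃ b ∈ Ioo s t, chordDet F s b t ≤ 0 := by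
  by_contra! hpos
  set I : ℝ := ∫ x in s..t, (F x - F s) with hI
  have hint : IntervalIntegrable (fun b => -((F b - F s) * I)) volume s t :=
    ((hF.sub continuousOn_const).mul continuousOn_const).neg.intervalIntegrable_of_Icc hlt.le
  have haverage : 0 < ∫ b in s..t, -((F b - F s) * I) :=
    intervalIntegral.intervalIntegral_pos_of_pos_on hint
      (fun b hb => chordDet_of_apply_eq hF hst (Ioo_subset_Icc_self hb) ▸ hpos b hb) hlt
  rw [intervalIntegral.integral_neg, intervalIntegral.integral_mul_const, ← hI] at haverage
  exact (neg_pos.1 haverage).not_ge (mul_self_nonneg I)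

lemma exists_chordDet_eq_zero (hlt : s < t) (hF : ContinuousOn F (Icc s t)) (hst : F s = F t) :
    ∃ p ∈ increasingTriples s t, chordDet F p.1 p.2.1 p.2.2 = 0 := by
  obtain ⟨b, hb, hnonpos⟩ := exists_chordDet_nonpos hlt hF hst
  have hsbt : (s, b, t) ∈ increasingTriples s t := ⟨le_rfl, hb.1, hb.2, le_rfl⟩
  by_cases hconst : ∀ m ∈ Icc s t, F s = F m
  · refine ⟨_, hsbt, ?_⟩
    rw [chordDet_of_apply_eq hF hst (Ioo_subset_Icc_self hb),
      ← hconst b (Ioo_subset_Icc_self hb), sub_self, zero_mul, neg_zero]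
  · push Not at hconst
    obtain ⟨m, hm, hne⟩ := hconst
    obtain ⟨p, hp, hpos⟩ := exists_chordDet_pos_of_ne hF hm hne
    exact (convex_increasingTriples s t).isPreconnected.intermediate_value hsbt hp
      (continuousOn_chordDet hlt.le hF) ⟨hnonpos, hpos.le⟩

end ChordDet

section PlaneDet

variable {K : Type*}

/-- The determinant of two vectors of the plane, which detects when they are parallel. -/
def planeDet [CommRing K] (u w : K × K) : K :=
  u.1 * w.2 - u.2 * w.1

lemma planeDet_eq_zero_of_span_eq [CommRing K] {u w : K × K}
    (h : span K {u} = span K {w}) : planeDet u w = 0 := by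
  obtain ⟨k, rfl⟩ := mem_span_singleton.1 (h ▸ mem_span_singleton_self u)
  simp only [planeDet, Prod.smul_fst, Prod.smul_snd, smul_eq_mul]
  ring

lemma span_eq_of_planeDet_eq_zero [Field K] {u w : K × K} (hu : u ≠ 0) (hw : w ≠ 0)
    (h : planeDet u w = 0) : span K {u} = span K {w} := by
  have hdet : u.1 * w.2 = u.2 * w.1 := sub_eq_zero.1 h
  obtain ⟨k, rfl⟩ : ∃ k : K, k • w = u := by
    by_cases hw₁ : w.1 = 0
    · have hw₂ : w.2 ≠ 0 := fun hw₂ => hw (Prod.ext hw₁ hw₂)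
      have hu₁ : u.1 = 0 := by simpa [hw₁, hw₂] using hdet
      exact ⟨u.2 / w.2, Prod.ext (by simp [hu₁, hw₁]) (div_mul_cancel₀ _ hw₂)⟩
    · refine ⟨u.1 / w.1, Prod.ext (div_mul_cancel₀ _ hw₁) ?_⟩
      rw [Prod.smul_snd, smul_eq_mul, div_mul_eq_mul_div, hdet, mul_div_cancel_right₀ _ hw₁]
  exact span_singleton_smul_eq (left_ne_zero_of_smul hu).isUnit w

end PlaneDet

section IntervalMoments

/-- The vector `v(s, t)` of the zeroth and first moments of the density `β` on the oriented interval
from `s` to `t`; the line it spans is the barycenter of the interval. -/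
noncomputable def intervalMoments (β : ℝ → ℝ) (s t : ℝ) : ℝ × ℝ :=
  (∫ x in s..t, β x, ∫ x in s..t, x * β x)

variable {β : ℝ → ℝ} {J : Set ℝ} {a b c o : ℝ}

lemma intervalMoments_symm (β : ℝ → ℝ) (a b : ℝ) :
    intervalMoments β b a = -intervalMoments β a b :=
  Prod.ext (intervalIntegral.integral_symm a b) (intervalIntegral.integral_symm a b)

lemma intervalMoments_add (hab : IntervalIntegrable β volume a b)
    (hbc : IntervalIntegrable β volume b c) :
    intervalMoments β a b + intervalMoments β b c = intervalMoments β a c :=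
  Prod.ext (intervalIntegral.integral_add_adjacent_intervals hab hbc)
    (intervalIntegral.integral_add_adjacent_intervals
      (hab.continuousOn_mul continuousOn_id) (hbc.continuousOn_mul continuousOn_id))

lemma intervalMoments_snd (h : IntervalIntegrable β volume a b) :
    (intervalMoments β a b).2 =
      b * (∫ x in a..b, β x) - ∫ x in a..b, ∫ y in a..x, β y := by
  have hid : AbsolutelyContinuousOnInterval (fun x : ℝ => x) a b :=
    LipschitzWith.id.lipschitzOnWith.absolutelyContinuousOnInterval
  have hprim : AbsolutelyContinuousOnInterval (fun x => ∫ y in a..x, β y) a b :=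
    h.absolutelyContinuousOnInterval_intervalIntegral left_mem_uIcc
  calc ∫ x in a..b, x * β x = ∫ x in a..b, x * deriv (fun x => ∫ y in a..x, β y) x := by
        refine intervalIntegral.integral_congr_ae ?_
        filter_upwards [h.ae_hasDerivAt_integral] with x hderiv hx
        rw [(hderiv (uIoc_subset_uIcc hx) a left_mem_uIcc).deriv]
    _ = b * (∫ x in a..b, β x) - ∫ x in a..b, ∫ y in a..x, β y := by
        rw [hid.integral_mul_deriv_eq_deriv_mul hprim]
        simp only [intervalIntegral.integral_same, mul_zero, sub_zero, deriv_id'', one_mul]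

lemma planeDet_intervalMoments (hoa : o ≤ a) (hab : a ≤ b) (hbc : b ≤ c)
    (h : IntervalIntegrable β volume o c) :
    planeDet (intervalMoments β a b) (intervalMoments β b c) =
      chordDet (fun x => ∫ y in o..x, β y) a b c := by
  have ho : o ∈ Icc o c := ⟨le_rfl, hoa.trans (hab.trans hbc)⟩
  have ha : a ∈ Icc o c := ⟨hoa, hab.trans hbc⟩
  have hb : b ∈ Icc o c := ⟨hoa.trans hab, hbc⟩
  have hc : c ∈ Icc o c := ⟨ho.2, le_rfl⟩
  have hβ {x y : ℝ} (hx : x ∈ Icc o c) (hy : y ∈ Icc o c) : IntervalIntegrable β volume x y :=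
    h.mono_set ((ordConnected_Icc.uIcc_subset hx hy).trans Icc_subset_uIcc)
  have hF {x y : ℝ} (hx : x ∈ Icc o c) (hy : y ∈ Icc o c) :
      IntervalIntegrable (fun x => ∫ y in o..x, β y) volume x y :=
    ((intervalIntegral.continuousOn_primitive_interval' h left_mem_uIcc).mono
      ((ordConnected_Icc.uIcc_subset hx hy).trans Icc_subset_uIcc)).intervalIntegrable
  have hv {x y : ℝ} (hx : x ∈ Icc o c) (hy : y ∈ Icc o c) :
      intervalMoments β x y = intervalMoments β o y - intervalMoments β o x :=
    eq_sub_of_add_eq' (intervalMoments_add (hβ ho hx) (hβ hx hy))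
  rw [chordDet_eq_of_intervalIntegrable (hF ha hb) (hF hb hc),
    ← intervalIntegral.integral_interval_sub_left (hF ho hb) (hF ho ha),
    ← intervalIntegral.integral_interval_sub_left (hF ho hc) (hF ho hb), hv ha hb, hv hb hc]
  simp only [planeDet, Prod.fst_sub, Prod.snd_sub, intervalMoments_snd (hβ ho ha),
    intervalMoments_snd (hβ ho hb), intervalMoments_snd (hβ ho hc)]
  simp only [intervalMoments]
  ring

lemma planeDet_intervalMoments_ne_zero_of_injOn
    (hβ : ∀ s ∈ J, ∀ t ∈ J, IntervalIntegrable β volume s t)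
    (hinj : ∀ s ∈ J, InjOn (fun t => span ℝ {intervalMoments β s t}) (J \ {s}))
    (ha : a ∈ J) (hb : b ∈ J) (hc : c ∈ J) (hab : a < b) (hbc : b < c) :
    planeDet (intervalMoments β a b) (intervalMoments β b c) ≠ 0 := by
  intro hdet
  have hac : a < c := hab.trans hbc
  have hadd := intervalMoments_add (hβ a ha b hb) (hβ b hb c hc)
  by_cases hu : intervalMoments β a b = 0
  · refine hab.ne (hinj c hc ⟨ha, hac.ne⟩ ⟨hb, hbc.ne⟩ ?_)
    simp only [intervalMoments_symm β _ c, ← hadd, hu, zero_add]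
  by_cases hw : intervalMoments β b c = 0
  · refine hbc.ne (hinj a ha ⟨hb, hab.ne'⟩ ⟨hc, hac.ne'⟩ ?_)
    simp only [← hadd, hw, add_zero]
  refine hac.ne (hinj b hb ⟨ha, hab.ne⟩ ⟨hc, hbc.ne'⟩ ?_)
  calc span ℝ {intervalMoments β b a} = span ℝ {intervalMoments β a b} := by
        rw [intervalMoments_symm, ← neg_singleton, span_neg]
    _ = span ℝ {intervalMoments β b c} := span_eq_of_planeDet_eq_zero hu hw hdet

lemma injOn_span_intervalMoments (hβ : ∀ s ∈ J, ∀ t ∈ J, IntervalIntegrable β volume s t)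
    (hdet : ∀ a ∈ J, ∀ b ∈ J, ∀ c ∈ J, a < b → b < c →
      planeDet (intervalMoments β a b) (intervalMoments β b c) ≠ 0) {s : ℝ} (hs : s ∈ J) :
    InjOn (fun t => span ℝ {intervalMoments β s t}) (J \ {s}) := by
  rintro t₁ ⟨ht₁, hne₁⟩ t₂ ⟨ht₂, hne₂⟩ hspan
  by_contra hne
  wlog hlt : t₁ < t₂ generalizing t₁ t₂
  · exact this ht₂ hne₂ ht₁ hne₁ hspan.symm (Ne.symm hne) ((lt_or_gt_of_ne hne).resolve_left hlt)
  have hzero : planeDet (intervalMoments β s t₁) (intervalMoments β s t₂) = 0 :=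
    planeDet_eq_zero_of_span_eq hspan
  rw [← intervalMoments_add (hβ s hs t₁ ht₁) (hβ t₁ ht₁ t₂ ht₂)] at hzero
  rcases lt_or_gt_of_ne hne₁ with h₁ | h₁
  · rcases lt_or_gt_of_ne hne₂ with h₂ | h₂
    · apply hdet t₁ ht₁ t₂ ht₂ s hs hlt h₂
      rw [intervalMoments_symm β s t₂,
        ← intervalMoments_add (hβ s hs t₁ ht₁) (hβ t₁ ht₁ t₂ ht₂)]
      simp only [planeDet, Prod.fst_add, Prod.snd_add, Prod.fst_neg, Prod.snd_neg] at hzero ⊢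
      linear_combination hzero
    · apply hdet t₁ ht₁ s hs t₂ ht₂ h₁ h₂
      rw [intervalMoments_symm β s t₁,
        ← intervalMoments_add (hβ s hs t₁ ht₁) (hβ t₁ ht₁ t₂ ht₂)]
      simp only [planeDet, Prod.fst_add, Prod.snd_add, Prod.fst_neg, Prod.snd_neg] at hzero ⊢
      linear_combination -hzero
  · apply hdet s hs t₁ ht₁ t₂ ht₂ h₁ hlt
    simp only [planeDet, Prod.fst_add, Prod.snd_add] at hzero ⊢
    linear_combination hzero

lemma injOn_integral_of_ne_zero (hβ : ∀ s ∈ J, ∀ t ∈ J, IntervalIntegrable β volume s t)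
    (hne : ∀ s ∈ J, ∀ t ∈ J, s < t → ∫ x in s..t, β x ≠ 0) (ho : o ∈ J) :
    InjOn (fun x => ∫ y in o..x, β y) J := by
  intro x hx y hy hxy
  have hzero : ∫ z in x..y, β z = 0 := by
    rw [← intervalIntegral.integral_interval_sub_left (hβ o ho y hy) (hβ o ho x hx)]
    exact sub_eq_zero.2 hxy.symm
  rcases lt_trichotomy x y with hlt | heq | hgt
  · exact absurd hzero (hne x hx y hy hlt)
  · exact heq
  · rw [intervalIntegral.integral_symm, neg_eq_zero] at hzero
    exact absurd hzero (hne y hy x hx hgt)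

end IntervalMoments

theorem stmt14_general {J : Set ℝ} (hJ : J.OrdConnected) {β : ℝ → ℝ}
    (hβ : ∀ s ∈ J, ∀ t ∈ J, IntervalIntegrable β volume s t) :
    (∀ s ∈ J, ∀ t ∈ J, s < t → ∫ x in s..t, β x ≠ 0) ↔
      ∀ s ∈ J, InjOn (fun t => span ℝ {intervalMoments β s t}) (J \ {s}) := by
  have hcont {s t : ℝ} (hs : s ∈ J) (ht : t ∈ J) (hst : s < t) :
      ContinuousOn (fun x => ∫ y in s..x, β y) (Icc s t) := by
    rw [← uIcc_of_le hst.le]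
    exact intervalIntegral.continuousOn_primitive_interval' (hβ s hs t ht) left_mem_uIcc
  constructor
  · intro hne s hs
    refine injOn_span_intervalMoments hβ (fun a ha b _ c hc hab hbc => ?_) hs
    rw [planeDet_intervalMoments le_rfl hab.le hbc.le (hβ a ha c hc)]
    exact (chordDet_pos_of_injOn (hcont ha hc (hab.trans hbc))
      ((injOn_integral_of_ne_zero hβ hne ha).mono (hJ.out ha hc)) ⟨hab, hbc⟩).ne'
  · intro hinj s hs t ht hst hzero
    obtain ⟨p, hp, hdet⟩ :=
      exists_chordDet_eq_zero hst (hcont hs ht hst)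
        (intervalIntegral.integral_same.trans hzero.symm)
    obtain ⟨ha, hb, hc⟩ := mem_Icc_of_mem_increasingTriples hp
    have hsub : Icc s t ⊆ J := hJ.out hs ht
    apply planeDet_intervalMoments_ne_zero_of_injOn hβ hinj (hsub ha) (hsub hb) (hsub hc)
      hp.2.1 hp.2.2.1
    rwa [planeDet_intervalMoments ha.1 hp.2.1.le hp.2.2.1.le (hβ s hs p.2.2 (hsub hc))]

theorem stmt14 (J : Set ℝ) (hJo : IsOpen J) (hJc : J.OrdConnected)
    (β : ℝ → ℝ) (hβ : ContinuousOn β J)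
    (hv : ∀ s ∈ J, ∀ t ∈ J, s ≠ t →
      (((∫ x in s..t, β x), (∫ x in s..t, x * β x)) : ℝ × ℝ) ≠ 0) :
    (∀ s ∈ J, ∀ t ∈ J, s < t → (∫ x in s..t, β x) ≠ 0) ↔
      (∀ s ∈ J, ∀ t₁ ∈ J \ {s}, ∀ t₂ ∈ J \ {s},
        Submodule.span ℝ {(((∫ x in s..t₁, β x), (∫ x in s..t₁, x * β x)) : ℝ × ℝ)} =
          Submodule.span ℝ {(((∫ x in s..t₂, β x), (∫ x in s..t₂, x * β x)) : ℝ × ℝ)} →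
        t₁ = t₂) :=
  stmt14_general hJc fun _ hs _ ht => (hβ.mono (hJc.uIcc_subset hs ht)).intervalIntegrable
end

section
/- Let J ⊆ ℝ be an open interval and β : J → ℝ continuous with β(x) ≠ 0 for all x ∈ J. Then for all s ≠ t in J the integral ∫ₛᵗ β(x) dx is nonzero, and the function B : J × J → ℝ defined by B(s,t) = (∫ₛᵗ x·β(x) dx)/(∫ₛᵗ β(x) dx) for s ≠ t and B(s,s) = s is of class C¹ on J × J and is strictly increasing in each argument when the other argument is held fixed. -/
/-! Substituting `x = s + (t - s) u` turns `∫ₛᵗ (t - x)ⁿ β(x) dx` into `(t - s)ⁿ⁺¹ Mₙ(s, t)`, where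
`Mₙ(s, t) = ∫₀¹ (1 - u)ⁿ β(s + (t - s) u) du` is jointly continuous, also across the diagonal, and
by the mean value theorem has the sign of `β`. With `M₀` and `M₁` the singularity of `B` cancels:
`B(s, t) = t - (t - s) M₁ / M₀`, and the quotient rule gives `∂B/∂t = β(t) M₁ / M₀²` off the
diagonal. The right-hand side is continuous and positive everywhere, so it is the derivative on the
diagonal as well; by the symmetry of `B` the same holds for `∂B/∂s`.

Since `B(s, t)` depends only on the values of `β` between `s` and `t`, and all the claims can be
checked on compact subintervals, from which `β` extends to `ℝ` by constants, one may take `J = ℝ`.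
-/

open Set Topology

section PartialDerivatives

variable {𝕜 E₁ E₂ F : Type*} [NontriviallyNormedField 𝕜] [IsRCLikeNormedField 𝕜]
  [NormedAddCommGroup E₁] [NormedSpace 𝕜 E₁] [NormedAddCommGroup E₂] [NormedSpace 𝕜 E₂]
  [NormedAddCommGroup F] [NormedSpace 𝕜 F]

theorem contDiff_one_uncurry_of_hasFDerivAt {f : E₁ → E₂ → F} {f₁ : E₁ → E₂ → E₁ →L[𝕜] F}
    {f₂ : E₁ → E₂ → E₂ →L[𝕜] F} (df₁ : ∀ x y, HasFDerivAt (f · y) (f₁ x y) x)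
    (df₂ : ∀ x y, HasFDerivAt (f x ·) (f₂ x y) y) (cf₁ : Continuous ↿f₁) (cf₂ : Continuous ↿f₂) :
    ContDiff 𝕜 1 ↿f := by
  refine contDiff_one_iff_hasFDerivAt.2 ⟨fun p ↦ (↿f₁ p).coprod (↿f₂ p), ?_, fun p ↦ ?_⟩
  · exact (ContinuousLinearMap.coprodEquivL 𝕜).continuous.comp (cf₁.prodMk cf₂)
  · exact (hasStrictFDerivAt_uncurry_coprod (.of_forall fun v ↦ df₁ v.1 v.2)
      (.of_forall fun v ↦ df₂ v.1 v.2) cf₁.continuousAt cf₂.continuousAt).hasFDerivAt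

theorem contDiff_one_uncurry_of_hasDerivAt {f f₁ f₂ : 𝕜 → 𝕜 → F}
    (df₁ : ∀ x y, HasDerivAt (f · y) (f₁ x y) x) (df₂ : ∀ x y, HasDerivAt (f x ·) (f₂ x y) y)
    (cf₁ : Continuous ↿f₁) (cf₂ : Continuous ↿f₂) : ContDiff 𝕜 1 ↿f :=
  have hL : Continuous (ContinuousLinearMap.toSpanSingleton 𝕜 : F → 𝕜 →L[𝕜] F) :=
    (ContinuousLinearMap.toSpanSingletonCLE (𝕜 := 𝕜) (E := F)).continuous
  contDiff_one_uncurry_of_hasFDerivAt (fun x y ↦ (df₁ x y).hasFDerivAt)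
    (fun x y ↦ (df₂ x y).hasFDerivAt) (hL.comp cf₁) (hL.comp cf₂)

end PartialDerivatives

section Intervals

theorem exists_Icc_mem_nhdsWithin_of_ordConnected {α : Type*} [LinearOrder α] [TopologicalSpace α]
    [OrderTopology α] {J : Set α} (hJ : J.OrdConnected) {x : α} (hx : x ∈ J) :
    ∃ a ∈ J, ∃ b ∈ J, Icc a b ∈ 𝓝[J] x := by
  obtain ⟨a, b, -, hab, -⟩ :=
    exists_Icc_mem_subset_of_mem_nhds (Filter.univ_mem : univ ∈ 𝓝 (⟨x, hx⟩ : J))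
  exact ⟨a, a.2, b, b.2, (preimage_coe_mem_nhds_subtype (t := Icc (a : α) b)).1 hab⟩

theorem exists_continuous_ne_zero_eqOn_Icc {α M : Type*} [LinearOrder α] [TopologicalSpace α]
    [OrderTopology α] [TopologicalSpace M] [Zero M] {a b : α} {f : α → M} (hab : a ≤ b)
    (hf : ContinuousOn f (Icc a b)) (hf₀ : ∀ x ∈ Icc a b, f x ≠ 0) :
    ∃ g : α → M, Continuous g ∧ (∀ x, g x ≠ 0) ∧ EqOn f g (Icc a b) :=
  ⟨IccExtend hab ((Icc a b).domRestrict f), hf.domRestrict.Icc_extend',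
    fun x ↦ hf₀ _ (projIcc a b hab x).2,
    fun _ hx ↦ (IccExtend_of_mem hab ((Icc a b).domRestrict f) hx).symm⟩

theorem mul_pos_of_continuous_of_ne_zero {X : Type*} [TopologicalSpace X] [PreconnectedSpace X]
    {R : Type*} [Ring R] [LinearOrder R] [IsStrictOrderedRing R] [TopologicalSpace R]
    [OrderClosedTopology R] {f : X → R} (hf : Continuous f) (hf₀ : ∀ x, f x ≠ 0) (x y : X) :
    0 < f x * f y := by
  by_contra! hxy
  obtain ⟨h, h'⟩ | ⟨h, h'⟩ := mul_nonpos_iff.1 hxy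
  · exact (mem_range_of_exists_le_of_exists_ge hf ⟨y, h'⟩ ⟨x, h⟩).elim hf₀
  · exact (mem_range_of_exists_le_of_exists_ge hf ⟨x, h⟩ ⟨y, h'⟩).elim hf₀

end Intervals

section SegmentMoment

variable {E F : Type*} [NormedAddCommGroup E] [NormedSpace ℝ E] [NormedAddCommGroup F]
  [NormedSpace ℝ F]

/-- The `n`-th moment of `f` along the segment from `s` to `t`, parametrised by `[0, 1]` and
measured from the endpoint `t`. -/
noncomputable def segmentMoment (n : ℕ) (f : E → F) (s t : E) : F :=
  ∫ u in (0 : ℝ)..1, (1 - u) ^ n • f (AffineMap.lineMap s t u)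

theorem continuous_segmentMoment (n : ℕ) {f : E → F} (hf : Continuous f) :
    Continuous ↿(segmentMoment n f) := by
  refine intervalIntegral.continuous_parametric_intervalIntegral_of_continuous'
    (f := fun (p : E × E) u ↦ (1 - u) ^ n • f (AffineMap.lineMap p.1 p.2 u)) ?_ 0 1
  exact (by fun_prop : Continuous fun q : (E × E) × ℝ ↦ (1 - q.2) ^ n).smul
    (hf.comp (continuous_fst.fst.lineMap continuous_fst.snd continuous_snd))

theorem integral_sub_pow_smul_eq_segmentMoment (n : ℕ) (f : ℝ → F) (s t : ℝ) :
    ∫ x in s..t, (t - x) ^ n • f x = (t - s) ^ (n + 1) • segmentMoment n f s t := by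
  have h := intervalIntegral.smul_integral_comp_add_mul (a := 0) (b := 1)
    (fun x ↦ (t - x) ^ n • f x) (t - s) s
  simp only [mul_zero, add_zero, mul_one, add_sub_cancel] at h
  rw [← h, segmentMoment, pow_succ', mul_smul, ← intervalIntegral.integral_smul ((t - s) ^ n)]
  congr! 3 with u
  have hpoint : AffineMap.lineMap s t u = s + (t - s) * u := by
    rw [AffineMap.lineMap_apply_ring']; ring
  have hweight : t - (s + (t - s) * u) = (t - s) * (1 - u) := by ring
  rw [hpoint, hweight, mul_pow, mul_smul]

theorem integral_eq_segmentMoment_zero (f : ℝ → F) (s t : ℝ) :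
    ∫ x in s..t, f x = (t - s) • segmentMoment 0 f s t := by
  simpa using integral_sub_pow_smul_eq_segmentMoment 0 f s t

theorem exists_segmentMoment_eq_div (n : ℕ) {f : ℝ → ℝ} {s t : ℝ}
    (hf : ContinuousOn f (uIcc s t)) :
    ∃ c ∈ uIcc s t, segmentMoment n f s t = f c / (n + 1) := by
  have hmem : MapsTo (AffineMap.lineMap s t) (uIcc (0 : ℝ) 1) (uIcc s t) := fun u hu ↦
    segment_eq_uIcc s t ▸ lineMap_mem_segment ℝ s t (uIcc_of_le (zero_le_one' ℝ) ▸ hu)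
  have hcont : ContinuousOn (fun u ↦ f (AffineMap.lineMap s t u)) (uIcc (0 : ℝ) 1) :=
    hf.comp AffineMap.lineMap_continuous.continuousOn hmem
  have hint : ∫ u in (0 : ℝ)..1, (1 - u) ^ n = 1 / (n + 1) := by
    simp [intervalIntegral.integral_comp_sub_left (fun u : ℝ ↦ u ^ n)]
  have hweight : ∀ u ∈ uIoc (0 : ℝ) 1, 0 ≤ (1 - u) ^ n := fun u hu ↦
    pow_nonneg (sub_nonneg.2 (uIoc_of_le (zero_le_one' ℝ) ▸ hu).2) n
  obtain ⟨u, hu, h⟩ := exists_eq_const_mul_intervalIntegral_of_nonneg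
    (μ := MeasureTheory.volume) hcont (Continuous.intervalIntegrable (by fun_prop) 0 1) hweight
  refine ⟨_, hmem hu, ?_⟩
  simp only [segmentMoment, smul_eq_mul, mul_comm _ (f _), h, hint, mul_one_div]

theorem segmentMoment_ne_zero (n : ℕ) {f : ℝ → ℝ} {s t : ℝ} (hf : ContinuousOn f (uIcc s t))
    (hf₀ : ∀ x ∈ uIcc s t, f x ≠ 0) : segmentMoment n f s t ≠ 0 := by
  obtain ⟨c, hc, h⟩ := exists_segmentMoment_eq_div n hf
  exact h ▸ div_ne_zero (hf₀ c hc) n.cast_add_one_ne_zero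

theorem integral_ne_zero_of_ne_zero {f : ℝ → ℝ} {s t : ℝ} (hst : s ≠ t)
    (hf : ContinuousOn f (uIcc s t)) (hf₀ : ∀ x ∈ uIcc s t, f x ≠ 0) : ∫ x in s..t, f x ≠ 0 :=
  integral_eq_segmentMoment_zero f s t ▸
    smul_ne_zero (sub_ne_zero.2 hst.symm) (segmentMoment_ne_zero 0 hf hf₀)

end SegmentMoment

/-- The barycentric map of the density `β`: the centre of mass of the segment between `s` and `t`,
with the degenerate segment `s = t` having centre of mass `s`. -/
noncomputable def barycentricMap (β : ℝ → ℝ) (s t : ℝ) : ℝ :=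
  if s = t then s else (∫ x in s..t, x * β x) / (∫ x in s..t, β x)

theorem barycentricMap_comm (β : ℝ → ℝ) (s t : ℝ) :
    barycentricMap β s t = barycentricMap β t s := by
  rcases eq_or_ne s t with rfl | h
  · rfl
  · simp only [barycentricMap, if_neg h, if_neg h.symm, intervalIntegral.integral_symm s t,
      neg_div_neg_eq]

theorem barycentricMap_congr {β γ : ℝ → ℝ} {s t : ℝ} (h : EqOn β γ (uIcc s t)) :
    barycentricMap β s t = barycentricMap γ s t := by
  simp only [barycentricMap, intervalIntegral.integral_congr h,
    intervalIntegral.integral_congr fun x hx ↦ congrArg (x * ·) (h hx)]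

/-- The partial derivative of `barycentricMap β` in its second argument, in a form that is
continuous on the diagonal; see `hasDerivAt_barycentricMap_right`. -/
noncomputable def barycentricMapDeriv (β : ℝ → ℝ) (s t : ℝ) : ℝ :=
  β t * segmentMoment 1 β s t / segmentMoment 0 β s t ^ 2

section GlobalDensity

variable {β : ℝ → ℝ} (hβ : Continuous β) (hβ₀ : ∀ x, β x ≠ 0)

include hβ in
theorem integral_id_mul_eq_segmentMoment (s t : ℝ) :
    ∫ x in s..t, x * β x =
      (t - s) * (t * segmentMoment 0 β s t - (t - s) * segmentMoment 1 β s t) := by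
  have h := integral_sub_pow_smul_eq_segmentMoment 1 β s t
  simp only [pow_one, smul_eq_mul, sub_mul] at h
  rw [intervalIntegral.integral_sub (Continuous.intervalIntegrable (by fun_prop) s t)
    (Continuous.intervalIntegrable (by fun_prop) s t), intervalIntegral.integral_const_mul,
    integral_eq_segmentMoment_zero β, smul_eq_mul] at h
  linear_combination -h

include hβ hβ₀

theorem segmentMoment_ne_zero_of_continuous (n : ℕ) (s t : ℝ) : segmentMoment n β s t ≠ 0 :=
  segmentMoment_ne_zero n hβ.continuousOn fun x _ ↦ hβ₀ x

theorem barycentricMap_eq_segmentMoment (s t : ℝ) :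
    barycentricMap β s t = t - (t - s) * (segmentMoment 1 β s t / segmentMoment 0 β s t) := by
  rcases eq_or_ne s t with rfl | hst
  · simp [barycentricMap]
  · have hM₀ := segmentMoment_ne_zero_of_continuous hβ hβ₀ 0 s t
    have hts : t - s ≠ 0 := sub_ne_zero.2 hst.symm
    rw [barycentricMap, if_neg hst, integral_id_mul_eq_segmentMoment hβ,
      integral_eq_segmentMoment_zero, smul_eq_mul]
    field_simp

theorem continuous_barycentricMap : Continuous ↿(barycentricMap β) := by
  have h : ↿(barycentricMap β) = fun p : ℝ × ℝ ↦
      p.2 - (p.2 - p.1) * (↿(segmentMoment 1 β) p / ↿(segmentMoment 0 β) p) :=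
    funext fun p ↦ barycentricMap_eq_segmentMoment hβ hβ₀ p.1 p.2
  rw [h]
  exact continuous_snd.sub ((continuous_snd.sub continuous_fst).mul
    ((continuous_segmentMoment 1 hβ).div (continuous_segmentMoment 0 hβ) fun _ ↦
      segmentMoment_ne_zero_of_continuous hβ hβ₀ 0 _ _))

theorem continuous_barycentricMapDeriv : Continuous ↿(barycentricMapDeriv β) :=
  ((hβ.comp continuous_snd).mul (continuous_segmentMoment 1 hβ)).div
    ((continuous_segmentMoment 0 hβ).pow 2) fun _ ↦
      pow_ne_zero 2 (segmentMoment_ne_zero_of_continuous hβ hβ₀ 0 _ _)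

theorem barycentricMapDeriv_pos (s t : ℝ) : 0 < barycentricMapDeriv β s t := by
  have hM₀ := segmentMoment_ne_zero_of_continuous hβ hβ₀ 0 s t
  obtain ⟨c, -, hc⟩ := exists_segmentMoment_eq_div 1 (s := s) (t := t) hβ.continuousOn
  have hsign := mul_pos_of_continuous_of_ne_zero hβ hβ₀ t c
  rw [barycentricMapDeriv, hc, mul_div_assoc']
  positivity

theorem hasDerivAt_barycentricMap_right_of_ne {s t : ℝ} (hst : s ≠ t) :
    HasDerivAt (barycentricMap β s) (barycentricMapDeriv β s t) t := by
  have hM₀ := segmentMoment_ne_zero_of_continuous hβ hβ₀ 0 s t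
  have hts : t - s ≠ 0 := sub_ne_zero.2 hst.symm
  have hden : HasDerivAt (fun y ↦ ∫ x in s..y, β x) (β t) t :=
    (hβ.integral_hasStrictDerivAt s t).hasDerivAt
  have hnum : HasDerivAt (fun y ↦ ∫ x in s..y, x * β x) (t * β t) t :=
    ((continuous_id.mul hβ).integral_hasStrictDerivAt s t).hasDerivAt
  have hquot := hnum.div hden (integral_ne_zero_of_ne_zero hst hβ.continuousOn fun x _ ↦ hβ₀ x)
  have hev : barycentricMap β s =ᶠ[𝓝 t]
      (fun y ↦ ∫ x in s..y, x * β x) / fun y ↦ ∫ x in s..y, β x := by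
    filter_upwards [isOpen_ne.mem_nhds hst.symm] with y hy
    exact if_neg hy.symm
  refine (hquot.congr_of_eventuallyEq hev).congr_deriv ?_
  rw [integral_id_mul_eq_segmentMoment hβ, integral_eq_segmentMoment_zero, smul_eq_mul,
    barycentricMapDeriv]
  field_simp
  ring

theorem hasDerivAt_barycentricMap_right (s t : ℝ) :
    HasDerivAt (barycentricMap β s) (barycentricMapDeriv β s t) t := by
  rcases eq_or_ne s t with rfl | hst
  · have hs : Continuous fun y : ℝ ↦ (s, y) := by fun_prop
    exact hasDerivAt_of_hasDerivAt_of_ne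
      (fun y hy ↦ hasDerivAt_barycentricMap_right_of_ne hβ hβ₀ hy.symm)
      ((continuous_barycentricMap hβ hβ₀).comp hs).continuousAt
      ((continuous_barycentricMapDeriv hβ hβ₀).comp hs).continuousAt
  · exact hasDerivAt_barycentricMap_right_of_ne hβ hβ₀ hst

theorem hasDerivAt_barycentricMap_left (s t : ℝ) :
    HasDerivAt (barycentricMap β · t) (barycentricMapDeriv β t s) s := by
  simpa only [barycentricMap_comm β _ t] using hasDerivAt_barycentricMap_right hβ hβ₀ t s

theorem strictMono_barycentricMap_right (s : ℝ) : StrictMono (barycentricMap β s) :=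
  strictMono_of_hasDerivAt_pos (hasDerivAt_barycentricMap_right hβ hβ₀ s)
    (barycentricMapDeriv_pos hβ hβ₀ s)

theorem contDiff_barycentricMap : ContDiff ℝ 1 ↿(barycentricMap β) :=
  contDiff_one_uncurry_of_hasDerivAt (hasDerivAt_barycentricMap_left hβ hβ₀)
    (hasDerivAt_barycentricMap_right hβ hβ₀)
    ((continuous_barycentricMapDeriv hβ hβ₀).comp continuous_swap)
    (continuous_barycentricMapDeriv hβ hβ₀)

end GlobalDensity

section Localization

variable {J : Set ℝ} {β : ℝ → ℝ}

theorem exists_continuous_eqOn_barycentricMap {a b : ℝ} (hab : a ≤ b)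
    (hβ : ContinuousOn β (Icc a b)) (hβ₀ : ∀ x ∈ Icc a b, β x ≠ 0) :
    ∃ γ : ℝ → ℝ, Continuous γ ∧ (∀ x, γ x ≠ 0) ∧
      EqOn ↿(barycentricMap β) ↿(barycentricMap γ) (Icc a b ×ˢ Icc a b) := by
  obtain ⟨γ, hγ, hγ₀, h⟩ := exists_continuous_ne_zero_eqOn_Icc hab hβ hβ₀
  exact ⟨γ, hγ, hγ₀, fun p hp ↦ barycentricMap_congr (h.mono (uIcc_subset_Icc hp.1 hp.2))⟩

theorem strictMonoOn_barycentricMap_right (hJ : J.OrdConnected) (hβ : ContinuousOn β J)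
    (hβ₀ : ∀ x ∈ J, β x ≠ 0) {s : ℝ} (hs : s ∈ J) : StrictMonoOn (barycentricMap β s) J := by
  intro t ht t' ht' htt'
  have hsub : Icc (min s t) (max s t') ⊆ J :=
    hJ.out (min_rec' (· ∈ J) hs ht) (max_rec' (· ∈ J) hs ht')
  obtain ⟨γ, hγ, hγ₀, h⟩ := exists_continuous_eqOn_barycentricMap
    ((min_le_left s t).trans (le_max_left s t')) (hβ.mono hsub) fun x hx ↦ hβ₀ x (hsub hx)
  have hs' : s ∈ Icc (min s t) (max s t') := ⟨min_le_left s t, le_max_left s t'⟩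
  have ht₁ : t ∈ Icc (min s t) (max s t') := ⟨min_le_right s t, htt'.le.trans (le_max_right s t')⟩
  have ht₂ : t' ∈ Icc (min s t) (max s t') := ⟨(min_le_right s t).trans htt'.le, le_max_right s t'⟩
  calc barycentricMap β s t
    _ = barycentricMap γ s t := h (mk_mem_prod hs' ht₁)
    _ < barycentricMap γ s t' := strictMono_barycentricMap_right hγ hγ₀ s htt'
    _ = barycentricMap β s t' := (h (mk_mem_prod hs' ht₂)).symm

theorem contDiffOn_barycentricMap (hJ : J.OrdConnected) (hβ : ContinuousOn β J)
    (hβ₀ : ∀ x ∈ J, β x ≠ 0) : ContDiffOn ℝ 1 ↿(barycentricMap β) (J ×ˢ J) := by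
  rintro ⟨s, t⟩ ⟨hs, ht⟩
  obtain ⟨a, ha, b, hb, hab⟩ := exists_Icc_mem_nhdsWithin_of_ordConnected hJ hs
  obtain ⟨c, hc, d, hd, hcd⟩ := exists_Icc_mem_nhdsWithin_of_ordConnected hJ ht
  set K := Icc (min a c) (max b d)
  have hsub : K ⊆ J := hJ.out (min_rec' (· ∈ J) ha hc) (max_rec' (· ∈ J) hb hd)
  have hKs : K ∈ 𝓝[J] s :=
    Filter.mem_of_superset hab (Icc_subset_Icc (min_le_left a c) (le_max_left b d))
  have hKt : K ∈ 𝓝[J] t :=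
    Filter.mem_of_superset hcd (Icc_subset_Icc (min_le_right a c) (le_max_right b d))
  have hsK : s ∈ K := mem_of_mem_nhdsWithin hs hKs
  have htK : t ∈ K := mem_of_mem_nhdsWithin ht hKt
  obtain ⟨γ, hγ, hγ₀, h⟩ := exists_continuous_eqOn_barycentricMap
    (hsK.1.trans hsK.2) (hβ.mono hsub) fun x hx ↦ hβ₀ x (hsub hx)
  have hcontDiff : ContDiffOn ℝ 1 ↿(barycentricMap β) (K ×ˢ K) :=
    (contDiff_barycentricMap hγ hγ₀).contDiffOn.congr h
  exact (hcontDiff (s, t) ⟨hsK, htK⟩).mono_of_mem_nhdsWithin (nhdsWithin_prod hKs hKt)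

end Localization

theorem stmt15_general {J : Set ℝ} (hJ : J.OrdConnected) {β : ℝ → ℝ} (hβ : ContinuousOn β J)
    (hβ₀ : ∀ x ∈ J, β x ≠ 0) :
    (∀ s ∈ J, ∀ t ∈ J, s ≠ t → (∫ x in s..t, β x) ≠ 0) ∧
      ContDiffOn ℝ 1 (fun p : ℝ × ℝ => barycentricMap β p.1 p.2) (J ×ˢ J) ∧
      (∀ t ∈ J, StrictMonoOn (fun s => barycentricMap β s t) J) ∧
      (∀ s ∈ J, StrictMonoOn (fun t => barycentricMap β s t) J) := by
  have hmono : ∀ s ∈ J, StrictMonoOn (barycentricMap β s) J := fun s hs ↦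
    strictMonoOn_barycentricMap_right hJ hβ hβ₀ hs
  refine ⟨fun s hs t ht hst ↦ ?_, contDiffOn_barycentricMap hJ hβ hβ₀, fun t ht ↦ ?_, hmono⟩
  · have hsub : uIcc s t ⊆ J := hJ.uIcc_subset hs ht
    exact integral_ne_zero_of_ne_zero hst (hβ.mono hsub) fun x hx ↦ hβ₀ x (hsub hx)
  · simpa only [barycentricMap_comm β _ t] using hmono t ht

theorem stmt15 (J : Set ℝ) (hJo : IsOpen J) (hJc : J.OrdConnected)
    (β : ℝ → ℝ) (hβ : ContinuousOn β J) (hβne : ∀ x ∈ J, β x ≠ 0)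
    (B : ℝ → ℝ → ℝ)
    (hB : ∀ s t : ℝ,
      B s t = if s = t then s else (∫ x in s..t, x * β x) / (∫ x in s..t, β x)) :
    (∀ s ∈ J, ∀ t ∈ J, s ≠ t → (∫ x in s..t, β x) ≠ 0) ∧
      ContDiffOn ℝ 1 (fun p : ℝ × ℝ => B p.1 p.2) (J ×ˢ J) ∧
      (∀ t ∈ J, StrictMonoOn (fun s => B s t) J) ∧
      (∀ s ∈ J, StrictMonoOn (fun t => B s t) J) := by
  obtain rfl : B = barycentricMap β := funext₂ hB
  exact stmt15_general hJc hβ hβne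
end

section
/- Let T = (tᵢʲ)₁≤i,j≤2 be a real 2×2 matrix with det T > 0, let e₁, e₂ be the standard basis of ℝ² and set e′ᵢ = tᵢ¹e₁ + tᵢ²e₂ for i = 1, 2. Let J′ ⊆ ℝ be an interval on which t₁¹ + x′·t₂¹ > 0, let φ(x′) = (t₁² + x′·t₂²)/(t₁¹ + x′·t₂¹), let f be continuous on φ(J′), and define f′(x′) = (det T/(t₁¹ + x′·t₂¹)³)·f(φ(x′)) for x′ ∈ J′. Then for all a ≤ b in J′: ∫ₐᵇ f′(x′)·(e′₁ + x′·e′₂) dx′ = ∫_{φ(a)}^{φ(b)} f(x)·(e₁ + x·e₂) dx, as vectors in ℝ². -/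
/-!
In the new basis the vector `e'₁ + x • e'₂` equals `d • (e₁ + φ x • e₂)` with `d = t₁¹ + x t₂¹`, and
the chart transition has derivative `φ' x = det T / d²`. The factor `det T / d³` of the
transformation rule is therefore `φ' x / d`: multiplied by `e'₁ + x • e'₂` it leaves
`φ' x • (e₁ + φ x • e₂)`, so the two integrals differ by the substitution `x ↦ φ x`, which is
monotone because `φ'` has the constant sign of `det T`.
-/

open Set intervalIntegral

section Algebra

variable {K E : Type*} [Field K] [AddCommGroup E] [Module K E]

/-- The pair of vectors obtained from `e` by the change of basis `e'ᵢ = ∑ⱼ tᵢʲ eⱼ`. The rows of `T`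
are the coordinates of the new vectors, so the paper's `tᵢʲ` is `T i j`. -/
def changeBasis (T : Matrix (Fin 2) (Fin 2) K) (e : Fin 2 → E) (i : Fin 2) : E :=
  ∑ j, T i j • e j

/-- The vector `e₁ + x • e₂` spanning the point with coordinate `x` in the chart of the projective
line attached to `e`. -/
def chartVector (e : Fin 2 → E) (x : K) : E :=
  e 0 + x • e 1

/-- The factor `t₁¹ + x t₂¹` relating the chart vectors of two bases at the same point; `x` is the
coordinate in the new chart. -/
def chartFactor (T : Matrix (Fin 2) (Fin 2) K) (x : K) : K :=
  T 0 0 + x * T 1 0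

/-- The transition map from the chart of `changeBasis T e` to the chart of `e`. It takes the junk
value `0` at the point `chartFactor T x = 0`, which the chart of `e` does not cover. -/
def chartTransition (T : Matrix (Fin 2) (Fin 2) K) (x : K) : K :=
  (T 0 1 + x * T 1 1) / chartFactor T x

/-- The function representing, in the chart of `changeBasis T e`, the vector-valued measure that `f`
represents in the chart of `e`. The determinant carries its sign, which is what oriented integrals
require. -/
def transformDensity (T : Matrix (Fin 2) (Fin 2) K) (f : K → K) (x : K) : K :=
  T.det / chartFactor T x ^ 3 * f (chartTransition T x)

theorem chartVector_changeBasis (T : Matrix (Fin 2) (Fin 2) K) (e : Fin 2 → E) {x : K}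
    (hx : chartFactor T x ≠ 0) :
    chartVector (changeBasis T e) x = chartFactor T x • chartVector e (chartTransition T x) := by
  have hφ : chartFactor T x * chartTransition T x = T 0 1 + x * T 1 1 := mul_div_cancel₀ _ hx
  simp only [chartVector, changeBasis, Fin.sum_univ_two, smul_add, smul_smul, hφ]
  simp only [chartFactor]
  module

theorem transformDensity_smul_chartVector_changeBasis (T : Matrix (Fin 2) (Fin 2) K)
    (e : Fin 2 → E) (f : K → K) {x : K} (hx : chartFactor T x ≠ 0) :
    transformDensity T f x • chartVector (changeBasis T e) x =
      (T.det / chartFactor T x ^ 2) •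
        f (chartTransition T x) • chartVector e (chartTransition T x) := by
  rw [chartVector_changeBasis T e hx, smul_smul, smul_smul, transformDensity]
  congr 1
  field_simp

end Algebra

theorem hasDerivAt_chartTransition {𝕜 : Type*} [NontriviallyNormedField 𝕜]
    (T : Matrix (Fin 2) (Fin 2) 𝕜) {x : 𝕜} (hx : chartFactor T x ≠ 0) :
    HasDerivAt (chartTransition T) (T.det / chartFactor T x ^ 2) x := by
  have hasDerivAt_affine (c m : 𝕜) : HasDerivAt (fun y => c + y * m) m x := by
    simpa using ((hasDerivAt_id x).mul_const m).const_add c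
  refine ((hasDerivAt_affine (T 0 1) (T 1 1)).fun_div
    (hasDerivAt_affine (T 0 0) (T 1 0)) hx).congr_deriv ?_
  rw [Matrix.det_fin_two, chartFactor]
  ring

section Integral

variable {E : Type*} [NormedAddCommGroup E] [NormedSpace ℝ E] (T : Matrix (Fin 2) (Fin 2) ℝ)
  {a b : ℝ}

theorem integral_det_div_chartFactor_sq_smul_comp (hT : ∀ x ∈ uIcc a b, chartFactor T x ≠ 0)
    (g : ℝ → E) :
    ∫ x in a..b, (T.det / chartFactor T x ^ 2) • g (chartTransition T x) =
      ∫ x in chartTransition T a..chartTransition T b, g x := by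
  have hderiv : ∀ x ∈ uIcc a b, HasDerivAt (chartTransition T) (T.det / chartFactor T x ^ 2) x :=
    fun x hx => hasDerivAt_chartTransition T (hT x hx)
  have hcont : ContinuousOn (chartTransition T) (uIcc a b) := HasDerivAt.continuousOn hderiv
  have hderiv_Ioo : ∀ x ∈ Ioo (min a b) (max a b),
      HasDerivAt (chartTransition T) (T.det / chartFactor T x ^ 2) x :=
    fun x hx => hderiv x (Ioo_subset_Icc_self hx)
  rcases le_total 0 T.det with hdet | hdet
  · exact integral_deriv_smul_comp_of_deriv_nonneg hcont hderiv_Ioo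
      fun x _ => div_nonneg hdet (sq_nonneg _)
  · exact integral_deriv_smul_comp_of_deriv_nonpos hcont hderiv_Ioo
      fun x _ => div_nonpos_of_nonpos_of_nonneg hdet (sq_nonneg _)

theorem stmt16_general (e : Fin 2 → E) (hT : ∀ x ∈ uIcc a b, chartFactor T x ≠ 0) {f f' : ℝ → ℝ}
    (hf' : EqOn f' (transformDensity T f) (uIcc a b)) :
    ∫ x in a..b, f' x • chartVector (changeBasis T e) x =
      ∫ x in chartTransition T a..chartTransition T b, f x • chartVector e x := by
  rw [← integral_det_div_chartFactor_sq_smul_comp T hT]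
  refine integral_congr fun x hx => ?_
  simp only [hf' hx, transformDensity_smul_chartVector_changeBasis T e f (hT x hx)]

end Integral

theorem stmt16 (t11 t12 t21 t22 : ℝ) (hdet : 0 < t11 * t22 - t12 * t21)
    (J' : Set ℝ) (hJ : J'.OrdConnected)
    (hpos : ∀ x' ∈ J', 0 < t11 + x' * t21)
    (f : ℝ → ℝ)
    (hf : ContinuousOn f ((fun x' => (t12 + x' * t22) / (t11 + x' * t21)) '' J'))
    (f' : ℝ → ℝ)
    (hf' : ∀ x' ∈ J', f' x' = ((t11 * t22 - t12 * t21) / (t11 + x' * t21) ^ 3) *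
      f ((t12 + x' * t22) / (t11 + x' * t21))) :
    ∀ a ∈ J', ∀ b ∈ J', a ≤ b →
      (∫ x' in a..b, f' x' • (((t11, t12) : ℝ × ℝ) + x' • ((t21, t22) : ℝ × ℝ)))
        = ∫ x in ((t12 + a * t22) / (t11 + a * t21))..((t12 + b * t22) / (t11 + b * t21)),
            f x • (((1, 0) : ℝ × ℝ) + x • ((0, 1) : ℝ × ℝ)) := by
  intro a ha b hb _
  have hsub : uIcc a b ⊆ J' := hJ.uIcc_subset ha hb
  simpa [chartVector, changeBasis, chartTransition, chartFactor] using
    stmt16_general !![t11, t12; t21, t22] ![((1, 0) : ℝ × ℝ), (0, 1)]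
      (fun x hx => (hpos x (hsub hx)).ne')
      (fun x hx => by
        simpa [transformDensity, chartTransition, chartFactor, Matrix.det_fin_two_of]
          using hf' x (hsub hx))
end

section
/- Let b be a nondegenerate symmetric bilinear form on ℝ³, and let q, p₁, p₂ ∈ ℝ³ be linearly independent vectors with b(q,q) = b(p₁,p₁) = b(p₂,p₂) = 0 (three distinct points of the conic {b = 0} in the projective plane). Let w ∈ ℝ³ be a nonzero vector with b(w,p₁) = 0 and b(w,p₂) = 0 (a representative of the intersection point p∞ of the tangent lines to the conic at p₁ and at p₂). Then there exist nonzero real numbers λ, μ and real numbers γ, c with c ≠ 0 such that b(q, λ·p₁ + μ·p₂) = 0 and λ·p₁ − μ·p₂ + γ·q = c·w. (Equivalently: in the pencil of lines through the point [q], the tangent line to the conic at [q] — spanned by q and λp₁ + μp₂ — is the harmonic conjugate of the line through [q] and [w] — spanned by q and λp₁ − μp₂ — with respect to the pair of lines joining [q] to [p₁] and to [p₂].) -/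
/-!
Two independent isotropic vectors of a nondegenerate three-dimensional space are never orthogonal,
since a totally isotropic subspace has at most half the dimension. Hence the numbers
`A = b q p₁`, `B = b q p₂` and `C = b p₁ p₂` are all nonzero. The vectors orthogonal to `p₁` and
`p₂` form a line, and `C q - B p₁ - A p₂` spans it; so `w` is proportional to this vector, while
the tangent at `q` passes through `-B p₁ + A p₂`.
-/

section CommRing

open LinearMap (BilinForm)
open Submodule

variable {R M ι : Type*} [CommRing R] [AddCommGroup M] [Module R M] {b : BilinForm R M}

theorem mem_orthogonal_span_range_iff {v : ι → M} {w : M} :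
    w ∈ b.orthogonal (span R (Set.range v)) ↔ ∀ i, b (v i) w = 0 := by
  have span_le_ker : span R (Set.range v) ≤ LinearMap.ker (b.flip w) ↔ ∀ i, b (v i) w = 0 := by
    rw [span_le, Set.range_subset_iff]
    rfl
  exact span_le_ker

/-- For isotropic `p₁` and `p₂`, a representative of the pole of the line `p₁p₂`, that is, of the
intersection of the tangents to the conic of `b` at `p₁` and `p₂`, expressed through a third vector
`q`. It is `b p₁ p₂` times the projection of `q` to the orthogonal complement of the plane spanned
by `p₁` and `p₂`; this scaling avoids division. -/
def poleVector (b : BilinForm R M) (q p₁ p₂ : M) : M :=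
  b p₁ p₂ • q - b q p₂ • p₁ - b q p₁ • p₂

theorem apply_poleVector_left (hsymm : b.IsSymm) {p₁ : M} (hp₁ : b p₁ p₁ = 0) (q p₂ : M) :
    b p₁ (poleVector b q p₁ p₂) = 0 := by
  simp only [poleVector, map_sub, map_smul, smul_eq_mul, hp₁, hsymm.eq p₁ q]
  ring

theorem apply_poleVector_right (hsymm : b.IsSymm) {p₂ : M} (hp₂ : b p₂ p₂ = 0) (q p₁ : M) :
    b p₂ (poleVector b q p₁ p₂) = 0 := by
  simp only [poleVector, map_sub, map_smul, smul_eq_mul, hp₂, hsymm.eq p₂ q, hsymm.eq p₂ p₁]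
  ring

theorem poleVector_ne_zero {q p₁ p₂ : M} (hli : LinearIndependent R ![q, p₁, p₂])
    (h : b p₁ p₂ ≠ 0) : poleVector b q p₁ p₂ ≠ 0 := by
  intro h₀
  refine h (Fintype.linearIndependent_iff.1 hli ![b p₁ p₂, -b q p₂, -b q p₁] ?_ 0)
  simpa [Fin.sum_univ_three, poleVector, sub_eq_add_neg] using h₀

end CommRing

section Field

open LinearMap (BilinForm)
open Module Submodule

variable {K V ι : Type*} [Field K] [AddCommGroup V] [Module K V] {b : BilinForm K V}

theorem two_mul_card_le_finrank_of_totallyIsotropic [FiniteDimensional K V] [Fintype ι]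
    (hb : b.Nondegenerate) {v : ι → V} (hv : LinearIndependent K v)
    (hv₀ : ∀ i j, b (v i) (v j) = 0) : 2 * Fintype.card ι ≤ finrank K V := by
  set W := span K (Set.range v)
  have hW : W ≤ b.orthogonal W :=
    span_le.2 <| Set.range_subset_iff.2 fun j ↦ mem_orthogonal_span_range_iff.2 fun i ↦ hv₀ i j
  have finrank_W : finrank K W = Fintype.card ι := finrank_span_eq_card hv
  have finrank_le : finrank K W ≤ finrank K V - finrank K W :=
    (finrank_mono hW).trans_eq (BilinForm.finrank_orthogonal hb W)
  lia

theorem apply_ne_zero_of_isotropic [FiniteDimensional K V] (hV : finrank K V < 4)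
    (hb : b.Nondegenerate) (hrefl : b.IsRefl) {v : ι → V} (hv : LinearIndependent K v)
    (hv₀ : ∀ i, b (v i) (v i) = 0) {i j : ι} (hij : i ≠ j) : b (v i) (v j) ≠ 0 := by
  intro h
  have hinj : Function.Injective ![i, j] := by
    simpa [Function.Injective, Fin.forall_fin_two] using ⟨hij, hij.symm⟩
  have four_le := two_mul_card_le_finrank_of_totallyIsotropic hb (hv.comp _ hinj)
    (by simp [Fin.forall_fin_two, hv₀, h, hrefl.eq_zero h])
  rw [Fintype.card_fin] at four_le
  lia

theorem exists_smul_eq_of_forall_apply_eq_zero [Fintype ι] (hb : b.Nondegenerate)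
    {v : ι → V} (hv : LinearIndependent K v) (hV : finrank K V = Fintype.card ι + 1)
    {w x : V} (hw : w ≠ 0) (hvw : ∀ i, b (v i) w = 0) (hvx : ∀ i, b (v i) x = 0) :
    ∃ c : K, c • w = x := by
  have : FiniteDimensional K V := .of_finrank_eq_succ hV
  set L := b.orthogonal (span K (Set.range v))
  have finrank_L : finrank K L = 1 := by
    rw [BilinForm.finrank_orthogonal hb, finrank_span_eq_card hv, hV, Nat.add_sub_cancel_left]
  have hw' : (⟨w, mem_orthogonal_span_range_iff.2 hvw⟩ : L) ≠ 0 := by simpa using hw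
  obtain ⟨c, hc⟩ := exists_smul_eq_of_finrank_eq_one finrank_L hw'
    ⟨x, mem_orthogonal_span_range_iff.2 hvx⟩
  exact ⟨c, congrArg Subtype.val hc⟩

theorem stmt18_general (hV : finrank K V = 3) (hsymm : b.IsSymm) (hb : b.Nondegenerate)
    {q p₁ p₂ : V} (hli : LinearIndependent K ![q, p₁, p₂])
    (hq : b q q = 0) (hp₁ : b p₁ p₁ = 0) (hp₂ : b p₂ p₂ = 0)
    {w : V} (hw : w ≠ 0) (hw₁ : b w p₁ = 0) (hw₂ : b w p₂ = 0) :
    ∃ lam mu gam c : K, lam ≠ 0 ∧ mu ≠ 0 ∧ c ≠ 0 ∧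
      b q (lam • p₁ + mu • p₂) = 0 ∧
      lam • p₁ - mu • p₂ + gam • q = c • w := by
  have : FiniteDimensional K V := .of_finrank_eq_succ hV
  have hiso : ∀ i, b (![q, p₁, p₂] i) (![q, p₁, p₂] i) = 0 := by
    simp [Fin.forall_fin_succ, hq, hp₁, hp₂]
  have apply_ne_zero {i j : Fin 3} (hij : i ≠ j) : b (![q, p₁, p₂] i) (![q, p₁, p₂] j) ≠ 0 :=
    apply_ne_zero_of_isotropic (by lia) hb hsymm.isRefl hli hiso hij
  have hA : b q p₁ ≠ 0 := apply_ne_zero (i := 0) (j := 1) (by decide)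
  have hB : b q p₂ ≠ 0 := apply_ne_zero (i := 0) (j := 2) (by decide)
  have hC : b p₁ p₂ ≠ 0 := apply_ne_zero (i := 1) (j := 2) (by decide)
  have hli' : LinearIndependent K ![p₁, p₂] := hli.comp _ (Fin.succ_injective 2)
  obtain ⟨c, hc⟩ : ∃ c : K, c • w = poleVector b q p₁ p₂ :=
    exists_smul_eq_of_forall_apply_eq_zero hb hli' hV hw
      (Fin.forall_fin_two.2 ⟨hsymm.isRefl.eq_zero hw₁, hsymm.isRefl.eq_zero hw₂⟩)
      (Fin.forall_fin_two.2 ⟨apply_poleVector_left hsymm hp₁ q p₂,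
        apply_poleVector_right hsymm hp₂ q p₁⟩)
  have hc₀ : c ≠ 0 := left_ne_zero_of_smul (hc ▸ poleVector_ne_zero hli hC)
  refine ⟨-b q p₂, b q p₁, b p₁ p₂, c, neg_ne_zero.2 hB, hA, hc₀, ?_, ?_⟩
  · simp only [map_add, map_smul, smul_eq_mul]
    ring
  · rw [hc, poleVector]
    module

end Field

theorem stmt18 (b : (Fin 3 → ℝ) →ₗ[ℝ] (Fin 3 → ℝ) →ₗ[ℝ] ℝ)
    (hsymm : ∀ u v : Fin 3 → ℝ, b u v = b v u)
    (hnd : ∀ v : Fin 3 → ℝ, (∀ u, b v u = 0) → v = 0)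
    (q p₁ p₂ : Fin 3 → ℝ) (hli : LinearIndependent ℝ ![q, p₁, p₂])
    (hq : b q q = 0) (hp₁ : b p₁ p₁ = 0) (hp₂ : b p₂ p₂ = 0)
    (w : Fin 3 → ℝ) (hw : w ≠ 0) (hw₁ : b w p₁ = 0) (hw₂ : b w p₂ = 0) :
    ∃ lam mu gam c : ℝ, lam ≠ 0 ∧ mu ≠ 0 ∧ c ≠ 0 ∧
      b q (lam • p₁ + mu • p₂) = 0 ∧
      lam • p₁ - mu • p₂ + gam • q = c • w :=
  stmt18_general (by simp) ⟨hsymm⟩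
    ((LinearMap.IsSymm.isRefl ⟨hsymm⟩).nondegenerate_iff_separatingLeft.2 hnd)
    hli hq hp₁ hp₂ hw hw₁ hw₂
end

section
/- Let p∞, p₁, p₂ ∈ ℝ³ be linearly independent vectors, and let q ∈ ℝ³ be a vector not contained in any of the three planes span{p∞,p₁}, span{p∞,p₂}, span{p₁,p₂}. Then the set of symmetric bilinear forms b on ℝ³ satisfying the five linear conditions b(p₁,p₁) = 0, b(p₂,p₂) = 0, b(q,q) = 0, b(p∞,p₁) = 0, b(p∞,p₂) = 0 is a one-dimensional subspace of the space of symmetric bilinear forms on ℝ³, and every nonzero element of this subspace is nondegenerate. (Thus the point [q] lies on a conic through [p₁] and [p₂] tangent there to the lines joining [p∞] to [p₁] and to [p₂] respectively, and this conic is unique.) -/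
/-!
In coordinates `(x₀, x₁, x₂)` with respect to the basis `p∞, p₁, p₂`, the conics through `p₁` and
`p₂` that are tangent there to the lines through `p∞` form the pencil `a x₀² + 2 c x₁ x₂ = 0`,
whose members with `a, c ≠ 0` are nondegenerate. Passing through `q` is one linear condition on
`(a, c)`; since no coordinate of `q` vanishes, it selects a single member of the pencil, and that
member has `a, c ≠ 0`.
-/

open Module

open LinearMap (BilinForm)

theorem repr_ne_zero_of_notMem_span_pair {ι R M : Type*} [Semiring R] [AddCommMonoid M]
    [Module R M] (e : Basis ι R M) {i j k : ι} (hijk : ∀ l, l = i ∨ l = j ∨ l = k) {v : M}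
    (hv : v ∉ Submodule.span R {e j, e k}) : e.repr v i ≠ 0 := by
  contrapose! hv
  rw [← Set.image_pair, e.mem_span_image]
  intro l hl
  rcases hijk l with rfl | hjk
  · exact absurd hv (Finsupp.mem_support_iff.mp hl)
  · exact hjk

/-- A symmetric bilinear form whose conic passes through the points `p₁` and `p₂`, tangentially
there to the lines joining them to `p∞`. The form may be degenerate, or even zero. -/
structure IsBitangent {R M : Type*} [CommSemiring R] [AddCommMonoid M] [Module R M]
    (b : BilinForm R M) (pinf p₁ p₂ : M) : Prop where
  isSymm : b.IsSymm
  self_left : b p₁ p₁ = 0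
  self_right : b p₂ p₂ = 0
  pinf_left : b pinf p₁ = 0
  pinf_right : b pinf p₂ = 0

section Pencil

variable {R M : Type*} [CommSemiring R] [AddCommMonoid M] [Module R M] (e : Basis (Fin 3) R M)

/-- The general member of the bitangent pencil of the triangle `e 0, e 1, e 2`: the polar form
`a u₀ v₀ + c (u₁ v₂ + u₂ v₁)` of the conic `a x₀² + 2 c x₁ x₂ = 0`. -/
noncomputable def bitangentForm (a c : R) : BilinForm R M :=
  a • BilinForm.linMulLin (e.coord 0) (e.coord 0) +
    c • (BilinForm.linMulLin (e.coord 1) (e.coord 2) + BilinForm.linMulLin (e.coord 2) (e.coord 1))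

theorem bitangentForm_apply (a c : R) (u v : M) :
    bitangentForm e a c u v = a * (e.repr u 0 * e.repr v 0) +
      c * (e.repr u 1 * e.repr v 2 + e.repr u 2 * e.repr v 1) := by
  simp [bitangentForm, mul_add]

theorem isBitangent_bitangentForm (a c : R) :
    IsBitangent (bitangentForm e a c) (e 0) (e 1) (e 2) where
  isSymm := ⟨fun u v => by simp only [bitangentForm_apply]; ring⟩
  self_left := by simp [bitangentForm_apply]
  self_right := by simp [bitangentForm_apply]
  pinf_left := by simp [bitangentForm_apply]
  pinf_right := by simp [bitangentForm_apply]

theorem IsBitangent.eq_bitangentForm {e : Basis (Fin 3) R M} {b : BilinForm R M}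
    (h : IsBitangent b (e 0) (e 1) (e 2)) :
    b = bitangentForm e (b (e 0) (e 0)) (b (e 1) (e 2)) := by
  have h10 : b (e 1) (e 0) = 0 := (h.isSymm.eq _ _).trans h.pinf_left
  have h20 : b (e 2) (e 0) = 0 := (h.isSymm.eq _ _).trans h.pinf_right
  have h21 : b (e 2) (e 1) = b (e 1) (e 2) := h.isSymm.eq _ _
  refine BilinForm.ext_basis e fun i j => ?_
  fin_cases i <;> fin_cases j <;>
    simp [bitangentForm_apply, h.self_left, h.self_right, h.pinf_left, h.pinf_right, h10, h20, h21]

theorem bitangentForm_separatingLeft [NoZeroDivisors R] {a c : R} (ha : a ≠ 0) (hc : c ≠ 0) :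
    (bitangentForm e a c).SeparatingLeft := by
  intro v hv
  have hv0 : e.repr v 0 = 0 := by simpa [bitangentForm_apply, ha] using hv (e 0)
  have hv1 : e.repr v 1 = 0 := by simpa [bitangentForm_apply, hc] using hv (e 2)
  have hv2 : e.repr v 2 = 0 := by simpa [bitangentForm_apply, hc] using hv (e 1)
  exact e.ext_elem fun i => by fin_cases i <;> simp [hv0, hv1, hv2]

end Pencil

section Conic

variable {R M : Type*} [CommRing R] [AddCommGroup M] [Module R M] (e : Basis (Fin 3) R M)

/-- The member of the bitangent pencil of `e 0, e 1, e 2` whose conic passes through `q`, with the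
scale chosen so that its coefficients are polynomials in the coordinates of `q`. -/
noncomputable def bitangentConic (q : M) : BilinForm R M :=
  bitangentForm e (2 * e.repr q 1 * e.repr q 2) (-e.repr q 0 ^ 2)

theorem bitangentConic_self (q : M) : bitangentConic e q q q = 0 := by
  rw [bitangentConic, bitangentForm_apply]
  ring

theorem bitangentConic_separatingLeft [NoZeroDivisors R] [NeZero (2 : R)] {q : M}
    (hq : ∀ i, e.repr q i ≠ 0) : (bitangentConic e q).SeparatingLeft :=
  bitangentForm_separatingLeft e (mul_ne_zero (mul_ne_zero two_ne_zero (hq 1)) (hq 2))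
    (neg_ne_zero.mpr (pow_ne_zero 2 (hq 0)))

end Conic

section Field

variable {K V : Type*} [Field K] [AddCommGroup V] [Module K V] {e : Basis (Fin 3) K V}
  {b : BilinForm K V} {q : V}

theorem IsBitangent.exists_eq_smul_bitangentConic (h : IsBitangent b (e 0) (e 1) (e 2))
    (hbq : b q q = 0) (hq : e.repr q 0 ≠ 0) : ∃ c : K, b = c • bitangentConic e q := by
  obtain ⟨a, c, rfl⟩ : ∃ a c, b = bitangentForm e a c := ⟨_, _, h.eq_bitangentForm⟩
  have ha : a = -c / e.repr q 0 ^ 2 * (2 * e.repr q 1 * e.repr q 2) := by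
    rw [bitangentForm_apply] at hbq
    field_simp
    linear_combination hbq
  refine ⟨-c / e.repr q 0 ^ 2, LinearMap.ext₂ fun u v => ?_⟩
  simp only [bitangentConic, LinearMap.smul_apply, bitangentForm_apply, smul_eq_mul, ha]
  field_simp
  ring

theorem IsBitangent.separatingLeft [NeZero (2 : K)] (h : IsBitangent b (e 0) (e 1) (e 2))
    (hbq : b q q = 0) (hq : ∀ i, e.repr q i ≠ 0) (hb : b ≠ 0) : b.SeparatingLeft := by
  obtain ⟨c, rfl⟩ := h.exists_eq_smul_bitangentConic hbq (hq 0)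
  have hc : c ≠ 0 := left_ne_zero_of_smul hb
  exact fun v hv => bitangentConic_separatingLeft e hq v fun u => by simpa [hc] using hv u

end Field

theorem stmt19_general {K V : Type*} [Field K] [NeZero (2 : K)] [AddCommGroup V] [Module K V]
    (hV : finrank K V = 3) (pinf p₁ p₂ : V)
    (hli : LinearIndependent K ![pinf, p₁, p₂])
    (q : V)
    (hq1 : q ∉ Submodule.span K {pinf, p₁})
    (hq2 : q ∉ Submodule.span K {pinf, p₂})
    (hq3 : q ∉ Submodule.span K {p₁, p₂}) :
    ∃ b₀ : BilinForm K V,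
      b₀ ≠ 0 ∧ (∀ u v, b₀ u v = b₀ v u) ∧
      b₀ p₁ p₁ = 0 ∧ b₀ p₂ p₂ = 0 ∧ b₀ q q = 0 ∧ b₀ pinf p₁ = 0 ∧ b₀ pinf p₂ = 0 ∧
      (∀ b : BilinForm K V,
        (∀ u v, b u v = b v u) →
        b p₁ p₁ = 0 → b p₂ p₂ = 0 → b q q = 0 → b pinf p₁ = 0 → b pinf p₂ = 0 →
        ∃ c : K, b = c • b₀) ∧
      (∀ b : BilinForm K V,
        (∀ u v, b u v = b v u) →
        b p₁ p₁ = 0 → b p₂ p₂ = 0 → b q q = 0 → b pinf p₁ = 0 → b pinf p₂ = 0 →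
        b ≠ 0 → ∀ v : V, (∀ u, b v u = 0) → v = 0) := by
  obtain ⟨e, he⟩ : ∃ e : Basis (Fin 3) K V, ⇑e = ![pinf, p₁, p₂] :=
    ⟨basisOfLinearIndependentOfCardEqFinrank hli (by simp [hV]), by simp⟩
  obtain rfl : e 0 = pinf := congrFun he 0
  obtain rfl : e 1 = p₁ := congrFun he 1
  obtain rfl : e 2 = p₂ := congrFun he 2
  have hq : ∀ i, e.repr q i ≠ 0 := by
    intro i
    fin_cases i
    · exact repr_ne_zero_of_notMem_span_pair e (by decide) hq3
    · exact repr_ne_zero_of_notMem_span_pair e (by decide) hq2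
    · exact repr_ne_zero_of_notMem_span_pair e (by decide) hq1
  have : Nontrivial V := nontrivial_of_finrank_pos (R := K) (by simp [hV])
  have hconic : IsBitangent (bitangentConic e q) (e 0) (e 1) (e 2) :=
    isBitangent_bitangentForm e _ _
  exact ⟨bitangentConic e q, (bitangentConic_separatingLeft e hq).ne_zero, hconic.isSymm.eq,
    hconic.self_left, hconic.self_right, bitangentConic_self e q, hconic.pinf_left,
    hconic.pinf_right,
    fun b hs h₁ h₂ hbq h₁' h₂' =>
      IsBitangent.exists_eq_smul_bitangentConic ⟨⟨hs⟩, h₁, h₂, h₁', h₂'⟩ hbq (hq 0),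
    fun b hs h₁ h₂ hbq h₁' h₂' =>
      IsBitangent.separatingLeft ⟨⟨hs⟩, h₁, h₂, h₁', h₂'⟩ hbq hq⟩

theorem stmt19 (pinf p₁ p₂ : Fin 3 → ℝ)
    (hli : LinearIndependent ℝ ![pinf, p₁, p₂])
    (q : Fin 3 → ℝ)
    (hq1 : q ∉ Submodule.span ℝ {pinf, p₁})
    (hq2 : q ∉ Submodule.span ℝ {pinf, p₂})
    (hq3 : q ∉ Submodule.span ℝ {p₁, p₂}) :
    ∃ b₀ : (Fin 3 → ℝ) →ₗ[ℝ] (Fin 3 → ℝ) →ₗ[ℝ] ℝ,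
      b₀ ≠ 0 ∧ (∀ u v, b₀ u v = b₀ v u) ∧
      b₀ p₁ p₁ = 0 ∧ b₀ p₂ p₂ = 0 ∧ b₀ q q = 0 ∧ b₀ pinf p₁ = 0 ∧ b₀ pinf p₂ = 0 ∧
      (∀ b : (Fin 3 → ℝ) →ₗ[ℝ] (Fin 3 → ℝ) →ₗ[ℝ] ℝ,
        (∀ u v, b u v = b v u) →
        b p₁ p₁ = 0 → b p₂ p₂ = 0 → b q q = 0 → b pinf p₁ = 0 → b pinf p₂ = 0 →
        ∃ c : ℝ, b = c • b₀) ∧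
      (∀ b : (Fin 3 → ℝ) →ₗ[ℝ] (Fin 3 → ℝ) →ₗ[ℝ] ℝ,
        (∀ u v, b u v = b v u) →
        b p₁ p₁ = 0 → b p₂ p₂ = 0 → b q q = 0 → b pinf p₁ = 0 → b pinf p₂ = 0 →
        b ≠ 0 → ∀ v : Fin 3 → ℝ, (∀ u, b v u = 0) → v = 0) :=
  stmt19_general (by simp) pinf p₁ p₂ hli q hq1 hq2 hq3
end
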